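/- arXiv:2101.12621 — 3 statements merged into one kernel-verified Lean document; each statement's English description precedes it below -/
import Mathlib

section
/- Let P be a finite pure weighted graded poset of rank d ≥ 2 with a standard weight scheme, in which every element of positive rank covers at least two elements and, for every x ∈ P(0) and u ∈ P(2) with x < u and every z with x ⋖ z ⋖ u, there exists w ≠ z with x ⋖ w ⋖ u. (1) If P satisfies equations TL.1 and TL.2 with constants c^=_1 and c^≠_1, then c^=_1 + c^≠_1 = 1. (2) If P satisfies equations TL.3 and TL.4 with constants c^=_2 and c^≠_2, then c^=_2 + c^≠_2 = 1. -/
open Finset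

attribute [local instance] Classical.propDecidable

noncomputable section

/-- A finite pure weighted graded poset of rank `d`, presented as a rank function
and a weight scheme on a finite partial order `P`. -/
structure WGP (P : Type) [Fintype P] [PartialOrder P] where
  /-- the rank of the poset -/
  d : ℤ
  /-- the rank function -/
  rk : P → ℤ
  rk_mono : Monotone rk
  rk_lb : ∀ x, -1 ≤ rk x
  rk_ub : ∀ x, rk x ≤ d
  rk_covBy : ∀ a b : P, a ⋖ b → rk b = rk a + 1
  bot_unique : ∃! x : P, rk x = -1
  isPure : ∀ x : P, ∃ y : P, rk y = d ∧ x ≤ y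
  /-- the weight function -/
  m : P → ℝ
  m_pos : ∀ x, 0 < m x
  /-- the transition probabilities: `p y x` is `p_{y → x}` -/
  p : P → P → ℝ
  p_nonneg : ∀ y x, 0 ≤ p y x
  p_pos_iff : ∀ y x, 0 < p y x ↔ x ⋖ y
  p_sum : ∀ y, 0 ≤ rk y → ∑ x ∈ univ.filter (fun x => x ⋖ y), p y x = 1
  m_eq : ∀ x, rk x < d → m x = ∑ y ∈ univ.filter (fun y => x ⋖ y), p y x * m y
  m_bot : ∀ x, rk x = -1 → m x = 1

/-- `T` has at most `n` eigenvalues greater than `c`, counted with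
(geometric) multiplicity. -/
def eigMultAboveLe {V : Type*} [AddCommGroup V] [Module ℝ V]
    (T : Module.End ℝ V) (c : ℝ) (n : ℕ) : Prop :=
  ∀ s : Finset ℝ, (∀ μ ∈ s, c < μ) →
    ∑ μ ∈ s, Module.finrank ℝ (T.eigenspace μ) ≤ n

/-- `μ` is the second largest eigenvalue of `T`, counted with multiplicity. -/
def IsSecondLargestEig {V : Type*} [AddCommGroup V] [Module ℝ V]
    (T : Module.End ℝ V) (μ : ℝ) : Prop :=
  T.HasEigenvalue μ ∧ eigMultAboveLe T μ 1 ∧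
    ∃ s : Finset ℝ, (∀ ν ∈ s, μ ≤ ν) ∧
      2 ≤ ∑ ν ∈ s, Module.finrank ℝ (T.eigenspace ν)

/-- `ν` is the least eigenvalue of `T`. -/
def IsLeastEig {V : Type*} [AddCommGroup V] [Module ℝ V]
    (T : Module.End ℝ V) (ν : ℝ) : Prop :=
  T.HasEigenvalue ν ∧ ∀ c : ℝ, T.HasEigenvalue c → ν ≤ c

/-- `λ(T) ≤ lam`, i.e. the second largest eigenvalue of `T` (with multiplicity)
is at most `lam` and the least eigenvalue is at least `-lam`. -/
def lamBd {V : Type*} [AddCommGroup V] [Module ℝ V]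
    (T : Module.End ℝ V) (lam : ℝ) : Prop :=
  eigMultAboveLe T lam 1 ∧ ∀ c : ℝ, T.HasEigenvalue c → -lam ≤ c

namespace WGP

variable {P : Type} [Fintype P] [PartialOrder P] (W : WGP P)

/-- The level set `P(i)`. -/
def lvl (i : ℤ) : Finset P := univ.filter (fun x => W.rk x = i)

/-- The weighted inner product on `C^i`. -/
def innerAt (i : ℤ) (f g : P → ℝ) : ℝ := ∑ x ∈ W.lvl i, W.m x * f x * g x

/-- The squared norm on `C^i`. -/
def normSqAt (i : ℤ) (f : P → ℝ) : ℝ := W.innerAt i f f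

/-- The norm on `C^i`. -/
def normAt (i : ℤ) (f : P → ℝ) : ℝ := Real.sqrt (W.normSqAt i f)

/-- The matrix of transition probabilities : entry `(y, x)` is `p_{y→x}`,
which vanishes unless `x ⋖ y`.  This is also the matrix of the up operator. -/
def upMat : Matrix P P ℝ := Matrix.of fun y x => W.p y x

/-- The matrix of the down operator. -/
def downMat : Matrix P P ℝ := Matrix.of fun x y => W.p y x * W.m y / W.m x

/-- The up operator `U`. -/
def Up (f : P → ℝ) : P → ℝ := W.upMat.mulVec f

/-- The down operator `D`. -/
def Down (f : P → ℝ) : P → ℝ := W.downMat.mulVec f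

/-- `chSum x y = Σ_{c ∈ Ch(y→x)} p(c)`, the total `p`-weight of maximal chains
from `x` up to `y` (the entry of the corresponding power of the transition
matrix). -/
def chSum (x y : P) : ℝ := (W.upMat ^ (W.rk y - W.rk x).toNat) y x

/-- The induced weight function of the link `P_x`. -/
def mL (x y : P) : ℝ := W.m y / W.m x * W.chSum x y

/-- The induced transition probabilities of the link `P_x` :
`pL x z y = (p_x)_{z → y}`. -/
def pL (x z y : P) : ℝ := W.p z y * W.chSum x y / W.chSum x z

/-- The level set `P_x(j)` of the link of `x`. -/
def linkLvl (x : P) (j : ℤ) : Finset P :=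
  univ.filter (fun y => x ≤ y ∧ W.rk y = W.rk x + 1 + j)

/-- The inner product of the link `P_x` at link-level `j`. -/
def innerL (x : P) (j : ℤ) (f g : P → ℝ) : ℝ :=
  ∑ y ∈ W.linkLvl x j, W.mL x y * f y * g y

/-- The matrix of the up operator of the link `P_x`. -/
def upMatL (x : P) : Matrix P P ℝ :=
  Matrix.of fun z y => if y ⋖ z ∧ x ≤ y then W.pL x z y else 0

/-- The matrix of the down operator of the link `P_x`. -/
def downMatL (x : P) : Matrix P P ℝ :=
  Matrix.of fun y z => if y ⋖ z then W.pL x z y * W.mL x z / W.mL x y else 0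

/-- The up operator of the link `P_x`. -/
def UpL (x : P) (f : P → ℝ) : P → ℝ := (W.upMatL x).mulVec f

/-- The down operator of the link `P_x`. -/
def DownL (x : P) (f : P → ℝ) : P → ℝ := (W.downMatL x).mulVec f

/-- The up-down walk `M^+_{x,0}` of the link `P_x`. -/
def MplusL (x : P) (f : P → ℝ) : P → ℝ := W.DownL x (W.UpL x f)

/-- The down-up walk `M^-_{x,0}` of the link `P_x`. -/
def MminusL (x : P) (f : P → ℝ) : P → ℝ := W.UpL x (W.DownL x f)

/-- The adjacency matrix. -/
def adjMat : Matrix P P ℝ := Matrix.of fun y x =>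
  if x = y then 0 else
    ∑ z ∈ univ.filter (fun z => x ⋖ z ∧ y ⋖ z),
      W.m z * W.p z x * W.p z y / ((1 - W.p z y) * W.m y)

/-- The adjacency operator. -/
def Adj (f : P → ℝ) : P → ℝ := W.adjMat.mulVec f

/-- The adjacency matrix of the link `P_x`. -/
def adjMatL (x : P) : Matrix P P ℝ := Matrix.of fun y w =>
  if w = y then 0 else
    ∑ z ∈ univ.filter (fun z => w ⋖ z ∧ y ⋖ z),
      W.mL x z * W.pL x z w * W.pL x z y / ((1 - W.pL x z y) * W.mL x y)

/-- The adjacency operator of the link `P_x`. -/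
def AdjL (x : P) (f : P → ℝ) : P → ℝ := (W.adjMatL x).mulVec f

/-- The up-down walk `M^+_l` as an endomorphism of `C^l`. -/
def MplusEnd (l : ℤ) : Module.End ℝ ({x : P // W.rk x = l} → ℝ) :=
  ((W.downMat * W.upMat).submatrix Subtype.val Subtype.val).mulVecLin

/-- The up-down walk `M^+_{x,0}` as an endomorphism of `C^0(P_x)`. -/
def MplusEndL (x : P) : Module.End ℝ ({y : P // x ⋖ y} → ℝ) :=
  ((W.downMatL x * W.upMatL x).submatrix Subtype.val Subtype.val).mulVecLin

/-- The adjacency operator `A_x` of the link `P_x` as an endomorphism of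
`C^0(P_x)`. -/
def AdjEndL (x : P) : Module.End ℝ ({y : P // x ⋖ y} → ℝ) :=
  ((W.adjMatL x).submatrix Subtype.val Subtype.val).mulVecLin

/-- A standard weight scheme. -/
def Standard : Prop :=
  ∀ y x : P, x ⋖ y → W.p y x = 1 / ((univ.filter (fun z => z ⋖ y)).card : ℝ)

/-- `P` is lower regular at level `i` with constant `N`. -/
def LowerRegAt (i : ℤ) (N : ℕ) : Prop :=
  ∀ y : P, W.rk y = i → (univ.filter (fun z => z ⋖ y)).card = N

/-- `P` is middle regular at level `i` with constant `N`. -/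
def MiddleRegAt (i : ℤ) (N : ℕ) : Prop :=
  ∀ x z : P, W.rk x = i + 1 → W.rk z = i - 1 → z < x →
    (univ.filter (fun y => z ⋖ y ∧ y ⋖ x)).card = N

/-- `P` is `∨∧`-regular at level `i` with constant `N`. -/
def WedgeRegAt (i : ℤ) (N : ℕ) : Prop :=
  ∀ y₁ y₂ : P, W.rk y₁ = i → W.rk y₂ = i → y₁ ≠ y₂ → (∃ z, y₁ ⋖ z ∧ y₂ ⋖ z) →
    (univ.filter (fun s => s ⋖ y₁ ∧ s ⋖ y₂)).card = N

/-- `P` is `⅄`-regular with constant `R`. -/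
def WyeReg (R : ℕ) : Prop :=
  ∀ u y₁ y₂ : P, W.rk u = 2 → W.rk y₁ = 0 → W.rk y₂ = 0 → y₁ ≠ y₂ →
    y₁ < u → y₂ < u →
    (univ.filter (fun z => y₁ ⋖ z ∧ y₂ ⋖ z ∧ z ⋖ u)).card = R

/-- Property UL.1 with constants `c`. -/
def UL1 (c : ℤ → ℝ) : Prop :=
  ∀ l : ℤ, 0 ≤ l → l < W.d → ∀ y : P, W.rk y = l → ∀ x : P, y ⋖ x →
    ∑ z ∈ univ.filter (fun z => z ⋖ y), W.p y z ^ 2 / W.chSum z x = c l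

/-- Property UL.2 with constants `c`. -/
def UL2 (c : ℤ → ℝ) : Prop :=
  ∀ l : ℤ, 0 ≤ l → l < W.d → ∀ y₁ y₂ : P, W.rk y₁ = l → W.rk y₂ = l → y₁ ≠ y₂ →
    ∀ x : P, y₁ ⋖ x → y₂ ⋖ x →
    ∑ z ∈ univ.filter (fun z => z ⋖ y₁ ∧ z ⋖ y₂),
      W.p y₁ z * W.p y₂ z / W.chSum z x = c l

/-- Property UL.3 with constants `c`. -/
def UL3 (c : ℤ → ℝ) : Prop :=
  ∀ l : ℤ, 0 ≤ l → l < W.d → ∀ y : P, W.rk y = l →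
    ∑ x ∈ univ.filter (fun x => y ⋖ x), W.m x * W.p x y ^ 2 = c l * W.m y

/-- Property AL. -/
def AL : Prop :=
  ∀ l : ℤ, 0 ≤ l → l ≤ W.d - 1 → ∀ x y : P, W.rk x = l → W.rk y = l → x ≠ y →
    ∑ z ∈ univ.filter (fun z => x ⋖ z ∧ y ⋖ z),
        W.m z * W.p z x * W.p z y / (1 - W.p z x)
    = ∑ z ∈ univ.filter (fun z => x ⋖ z ∧ y ⋖ z),
        W.m z * W.p z x * W.p z y *
          ∑ s ∈ univ.filter (fun s => s ⋖ x ∧ s ⋖ y),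
            W.p x s * W.p y s / (W.chSum s z - W.p z x * W.p x s)

/-- Equation TL.1 with constant `c`. -/
def TL1 (c : ℝ) : Prop :=
  ∀ y : P, W.rk y = 0 →
    c * W.m y = ∑ z ∈ univ.filter (fun z => y ⋖ z), W.m z * W.p z y ^ 2 *
      ∑ x ∈ univ.filter (fun x => x ⋖ z ∧ x ≠ y), W.p z x / (1 - W.p z x) ^ 2

/-- Equation TL.2 with constant `c`. -/
def TL2 (c : ℝ) : Prop :=
  ∀ y₁ y₂ : P, W.rk y₁ = 0 → W.rk y₂ = 0 → y₁ ≠ y₂ →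
    c * ∑ z ∈ univ.filter (fun z => y₁ ⋖ z ∧ y₂ ⋖ z),
          W.m z * W.p z y₁ * W.p z y₂ / (1 - W.p z y₁)
    = ∑ z ∈ univ.filter (fun z => y₁ ⋖ z ∧ y₂ ⋖ z),
        W.m z * W.p z y₁ * W.p z y₂ *
          ∑ x ∈ univ.filter (fun x => x ⋖ z ∧ x ≠ y₁ ∧ x ≠ y₂),
            W.p z x / (1 - W.p z x) ^ 2

/-- Equation TL.3 with constant `c`. -/
def TL3 (c : ℝ) : Prop :=
  ∀ y : P, W.rk y = 0 →
    c * W.m y =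
      ∑ x ∈ univ.filter (fun x => W.rk x = 0 ∧ x ≠ y),
        ∑ z ∈ univ.filter (fun z => x ⋖ z ∧ y ⋖ z),
          ∑ w ∈ univ.filter (fun w => w ≠ z ∧ x ⋖ w ∧ y ⋖ w),
            ∑ u ∈ univ.filter (fun u => z ⋖ u ∧ w ⋖ u),
              W.m u * W.p u z * W.p u w * W.p w y * W.p z y * W.p w x * W.p z x /
                (W.chSum x u * (1 - W.p u z * W.p z x / W.chSum x u) *
                  (1 - W.p w x) * (1 - W.p z x))

/-- Equation TL.4 with constant `c`. -/
def TL4 (c : ℝ) : Prop :=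
  ∀ y₁ y₂ : P, W.rk y₁ = 0 → W.rk y₂ = 0 → y₁ ≠ y₂ →
    c * ∑ z ∈ univ.filter (fun z => y₁ ⋖ z ∧ y₂ ⋖ z),
          W.m z * W.p z y₁ * W.p z y₂ / (1 - W.p z y₁)
    = ∑ x ∈ univ.filter (fun x => W.rk x = 0 ∧ x ≠ y₁ ∧ x ≠ y₂),
        ∑ z ∈ univ.filter (fun z => x ⋖ z ∧ y₂ ⋖ z),
          ∑ w ∈ univ.filter (fun w => w ≠ z ∧ x ⋖ w ∧ y₁ ⋖ w),
            ∑ u ∈ univ.filter (fun u => z ⋖ u ∧ w ⋖ u),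
              W.m u * W.p u z * W.p u w * W.p w y₁ * W.p z y₂ * W.p w x * W.p z x /
                (W.chSum x u * (1 - W.p u z * W.p z x / W.chSum x u) *
                  (1 - W.p w x) * (1 - W.p z x))

/-- The induced function `f̂_x ∈ C^0(P_x)` of `f ∈ C^0`. -/
def hatF (x : P) (f : P → ℝ) : P → ℝ := fun z =>
  (1 / (1 - W.p z x)) * ∑ y ∈ univ.filter (fun y => y ≠ x ∧ y ⋖ z), W.p z y * f y

/-- `P` is connected: the Markov chain `M^+_0` on `P(0)` is irreducible. -/
def Connected : Prop :=
  ∀ y z : P, W.rk y = 0 → W.rk z = 0 →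
    ∃ j : ℕ, 0 < j ∧ ((W.downMat * W.upMat) ^ j) z y ≠ 0

/-- The link `P_x` is connected: the Markov chain `M^+_{x,0}` on `P_x(0)` is
irreducible. -/
def LinkConnected (x : P) : Prop :=
  ∀ y z : P, x ⋖ y → x ⋖ z →
    ∃ j : ℕ, 0 < j ∧ ((W.downMatL x * W.upMatL x) ^ j) z y ≠ 0

/-- `c` is a nontrivial eigenvalue of the adjacency operator `A` of `P`,
i.e. one with an eigenvector orthogonal to the constants. -/
def IsNontrivEigAdj (c : ℝ) : Prop :=
  ∃ f : P → ℝ, (∃ y, W.rk y = 0 ∧ f y ≠ 0) ∧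
    (∀ y, W.rk y = 0 → W.Adj f y = c * f y) ∧
    W.innerAt 0 f (fun _ => 1) = 0

/-- `c` is a nontrivial eigenvalue of the adjacency operator `A_x` of the
link `P_x`. -/
def IsNontrivEigAdjL (x : P) (c : ℝ) : Prop :=
  ∃ f : P → ℝ, (∃ y, x ⋖ y ∧ f y ≠ 0) ∧
    (∀ y, x ⋖ y → W.AdjL x f y = c * f y) ∧
    W.innerL x 0 f (fun _ => 1) = 0

end WGP


namespace WGP

variable {P : Type} [Fintype P] [PartialOrder P] (W : WGP P)

theorem aux_mem_lvl (i : ℤ) (x : P) : x ∈ W.lvl i ↔ W.rk x = i := by simp [lvl]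

theorem aux_p_lt (hcov : ∀ y : P, 1 ≤ W.rk y → 2 ≤ (Finset.univ.filter (fun z => z ⋖ y)).card)
    (x z : P) (hz : 1 ≤ W.rk z) (hxz : x ⋖ z) : W.p z x < 1 := by
  have h1 := W.p_sum z (by omega)
  have h2 := hcov z hz
  obtain ⟨a, ha, hax⟩ := Finset.exists_mem_ne (Nat.lt_of_succ_le h2) x
  rw [← h1]
  refine Finset.single_lt_sum hax (by simpa using hxz) ha ?_ (fun k _ _ => W.p_nonneg _ _)
  exact (W.p_pos_iff _ _).2 (by simpa using ha)

theorem aux_sum_ne (x z : P) (hz : 0 ≤ W.rk z) (hxz : x ⋖ z) :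
    ∑ y ∈ univ.filter (fun y => y ⋖ z ∧ y ≠ x), W.p z y = 1 - W.p z x := by
  have h1 := W.p_sum z hz
  have h2 : univ.filter (fun y => y ⋖ z ∧ y ≠ x) = (univ.filter (fun y => y ⋖ z)).erase x := by
    ext y; simp [and_comm]
  rw [h2, ← h1, ← Finset.add_sum_erase _ _ (show x ∈ univ.filter (fun y => y ⋖ z) by simpa using hxz)]
  ring

theorem aux_E (hd : 2 ≤ W.d)
    (hcov : ∀ y : P, 1 ≤ W.rk y → 2 ≤ (Finset.univ.filter (fun z => z ⋖ y)).card)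
    (y : P) (hy : W.rk y = 0) :
    ∑ y₂ ∈ (W.lvl 0).erase y, ∑ z ∈ univ.filter (fun z => y ⋖ z ∧ y₂ ⋖ z),
          W.m z * W.p z y * W.p z y₂ / (1 - W.p z y) = W.m y := by
  rw [W.m_eq y (by omega)]
  rw [Finset.sum_comm' (t' := univ.filter (fun z => y ⋖ z))
    (s' := fun z => univ.filter (fun y₂ => y₂ ⋖ z ∧ y₂ ≠ y))]
  · refine Finset.sum_congr rfl fun z hz => ?_
    have hz : y ⋖ z := by simpa using hz
    have hr := W.rk_covBy _ _ hz
    have h1 := W.aux_p_lt hcov y z (by omega) hz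
    have h2 : 1 - W.p z y ≠ 0 := by linarith
    rw [← Finset.sum_div, ← Finset.mul_sum, W.aux_sum_ne y z (by omega) hz]
    field_simp
  · intro a b
    simp only [Finset.mem_erase, aux_mem_lvl, Finset.mem_filter, Finset.mem_univ, true_and]
    constructor
    · rintro ⟨⟨h1, h2⟩, h3, h4⟩; exact ⟨⟨h4, h1⟩, h3⟩
    · rintro ⟨⟨h4, h1⟩, h3⟩
      have e1 := W.rk_covBy _ _ h3
      have e2 := W.rk_covBy _ _ h4
      exact ⟨⟨h1, by omega⟩, h3, h4⟩

theorem aux_M_pos (hd : 2 ≤ W.d) : 0 < ∑ y ∈ W.lvl 0, W.m y := by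
  obtain ⟨b, hb, -⟩ := W.bot_unique
  refine Finset.sum_pos (fun y _ => W.m_pos y) ?_
  by_contra hne
  have h := W.m_eq b (by omega)
  rw [Finset.sum_eq_zero] at h
  · exact (W.m_pos b).ne' h
  · intro y hy
    have hy : b ⋖ y := by simpa using hy
    have := W.rk_covBy _ _ hy
    exact absurd ⟨y, (W.aux_mem_lvl 0 y).2 (by omega)⟩ hne

/-- General principle. -/
theorem aux_main (hd : 2 ≤ W.d)
    (hcov : ∀ y : P, 1 ≤ W.rk y → 2 ≤ (Finset.univ.filter (fun z => z ⋖ y)).card)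
    (G : P → P → ℝ) (c c' : ℝ)
    (h1 : ∀ y, W.rk y = 0 → c * W.m y = G y y)
    (h2 : ∀ y₁ y₂ : P, W.rk y₁ = 0 → W.rk y₂ = 0 → y₁ ≠ y₂ →
      c' * ∑ z ∈ univ.filter (fun z => y₁ ⋖ z ∧ y₂ ⋖ z),
          W.m z * W.p z y₁ * W.p z y₂ / (1 - W.p z y₁) = G y₁ y₂)
    (h3 : ∑ y₁ ∈ W.lvl 0, ∑ y₂ ∈ W.lvl 0, G y₁ y₂ = ∑ y ∈ W.lvl 0, W.m y) :
    c + c' = 1 := by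
  have hM := W.aux_M_pos hd
  have key : ∑ y₁ ∈ W.lvl 0, ∑ y₂ ∈ W.lvl 0, G y₁ y₂ = (c + c') * ∑ y ∈ W.lvl 0, W.m y := by
    rw [Finset.mul_sum]
    refine Finset.sum_congr rfl fun y hy => ?_
    have hy0 := (W.aux_mem_lvl 0 y).1 hy
    rw [← Finset.add_sum_erase _ _ hy, ← h1 y hy0]
    have : ∑ y₂ ∈ (W.lvl 0).erase y, G y y₂ = c' * W.m y := by
      conv_rhs => rw [← W.aux_E hd hcov y hy0]
      rw [Finset.mul_sum]
      refine Finset.sum_congr rfl fun y₂ hy₂ => ?_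
      rw [Finset.mem_erase, aux_mem_lvl] at hy₂
      exact (h2 y y₂ hy0 hy₂.2 hy₂.1.symm).symm
    rw [this]; ring
  rw [h3] at key
  exact mul_right_cancel₀ hM.ne' (by rw [one_mul]; exact key.symm)

theorem aux_M1 (hd : 2 ≤ W.d) : ∑ y ∈ W.lvl 0, W.m y = ∑ z ∈ W.lvl 1, W.m z := by
  rw [Finset.sum_congr rfl fun y hy => W.m_eq y (by have := (W.aux_mem_lvl 0 y).1 hy; omega)]
  rw [Finset.sum_comm' (t' := W.lvl 1) (s' := fun z => univ.filter (fun y => y ⋖ z))]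
  · refine Finset.sum_congr rfl fun z hz => ?_
    have := (W.aux_mem_lvl 1 z).1 hz
    rw [← Finset.sum_mul, W.p_sum z (by omega), one_mul]
  · intro a b
    simp only [aux_mem_lvl, Finset.mem_filter, Finset.mem_univ, true_and]
    constructor
    · rintro ⟨h1, h2⟩
      have := W.rk_covBy _ _ h2
      exact ⟨h2, by omega⟩
    · rintro ⟨h2, h1⟩
      have := W.rk_covBy _ _ h2
      exact ⟨by omega, h2⟩

def auxG1 (y₁ y₂ : P) : ℝ :=
  ∑ z ∈ univ.filter (fun z => y₁ ⋖ z ∧ y₂ ⋖ z),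
        W.m z * W.p z y₁ * W.p z y₂ *
          ∑ x ∈ univ.filter (fun x => x ⋖ z ∧ x ≠ y₁ ∧ x ≠ y₂),
            W.p z x / (1 - W.p z x) ^ 2

theorem aux_G1 (hd : 2 ≤ W.d)
    (hcov : ∀ y : P, 1 ≤ W.rk y → 2 ≤ (Finset.univ.filter (fun z => z ⋖ y)).card) :
    ∑ y₁ ∈ W.lvl 0, ∑ y₂ ∈ W.lvl 0, W.auxG1 y₁ y₂ = ∑ y ∈ W.lvl 0, W.m y := by
  rw [W.aux_M1 hd]
  unfold auxG1
  simp only [Finset.mul_sum]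
  rw [← Finset.sum_product']
  rw [Finset.sum_comm' (t' := W.lvl 1)
    (s' := fun z => (univ.filter (fun y => y ⋖ z)) ×ˢ (univ.filter (fun y => y ⋖ z)))]
  · refine Finset.sum_congr rfl fun z hz => ?_
    have hz1 := (W.aux_mem_lvl 1 z).1 hz
    rw [Finset.sum_comm' (t' := univ.filter (fun x => x ⋖ z))
      (s' := fun x => (univ.filter (fun y => y ⋖ z ∧ y ≠ x)) ×ˢ
        (univ.filter (fun y => y ⋖ z ∧ y ≠ x)))]
    · conv_rhs => rw [← mul_one (W.m z), ← W.p_sum z (by omega), Finset.mul_sum]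
      refine Finset.sum_congr rfl fun x hx => ?_
      have hx : x ⋖ z := by simpa using hx
      have h1 := W.aux_p_lt hcov x z (by omega) hx
      have h2 : 1 - W.p z x ≠ 0 := by linarith
      have h3 := W.aux_sum_ne x z (by omega) hx
      rw [Finset.sum_product]
      simp only [← Finset.sum_mul, ← Finset.mul_sum, h3]
      field_simp
    · rintro ⟨a, b⟩ x
      simp only [Finset.mem_product, Finset.mem_filter, Finset.mem_univ, true_and, ne_eq]
      grind
  · rintro ⟨a, b⟩ z
    simp only [Finset.mem_product, aux_mem_lvl, Finset.mem_filter, Finset.mem_univ, true_and]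
    constructor
    · rintro ⟨⟨h1, h2⟩, h3, h4⟩
      have := W.rk_covBy _ _ h3
      exact ⟨⟨h3, h4⟩, by omega⟩
    · rintro ⟨⟨h3, h4⟩, h1⟩
      have e1 := W.rk_covBy _ _ h3
      have e2 := W.rk_covBy _ _ h4
      exact ⟨⟨by omega, by omega⟩, h3, h4⟩

def auxG2 (y₁ y₂ : P) : ℝ :=
  ∑ x ∈ univ.filter (fun x => W.rk x = 0 ∧ x ≠ y₁ ∧ x ≠ y₂),
        ∑ z ∈ univ.filter (fun z => x ⋖ z ∧ y₂ ⋖ z),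
          ∑ w ∈ univ.filter (fun w => w ≠ z ∧ x ⋖ w ∧ y₁ ⋖ w),
            ∑ u ∈ univ.filter (fun u => z ⋖ u ∧ w ⋖ u),
              W.m u * W.p u z * W.p u w * W.p w y₁ * W.p z y₂ * W.p w x * W.p z x /
                (W.chSum x u * (1 - W.p u z * W.p z x / W.chSum x u) *
                  (1 - W.p w x) * (1 - W.p z x))

theorem aux_chSum (x u : P) (hx : W.rk x = 0) (hu : W.rk u = 2) :
    W.chSum x u = ∑ z ∈ univ.filter (fun z => x ⋖ z ∧ z ⋖ u), W.p u z * W.p z x := by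
  have : (W.rk u - W.rk x).toNat = 2 := by omega
  rw [chSum, this, pow_two, Matrix.mul_apply]
  simp only [upMat, Matrix.of_apply]
  symm
  refine Finset.sum_subset (Finset.subset_univ _) fun z _ hz => ?_
  by_contra h
  obtain ⟨h1, h2⟩ := mul_ne_zero_iff.1 h
  have h1 := (W.p_pos_iff _ _).1 (lt_of_le_of_ne (W.p_nonneg _ _) h1.symm)
  have h2 := (W.p_pos_iff _ _).1 (lt_of_le_of_ne (W.p_nonneg _ _) h2.symm)
  exact hz (by simp [h1, h2])

theorem aux_G2 (hd : 2 ≤ W.d)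
    (hcov : ∀ y : P, 1 ≤ W.rk y → 2 ≤ (Finset.univ.filter (fun z => z ⋖ y)).card)
    (hzw : ∀ x u z : P, W.rk x = 0 → W.rk u = 2 → x < u → x ⋖ z → z ⋖ u →
      ∃ w : P, w ≠ z ∧ x ⋖ w ∧ w ⋖ u) :
    ∑ y₁ ∈ W.lvl 0, ∑ y₂ ∈ W.lvl 0, W.auxG2 y₁ y₂ = ∑ y ∈ W.lvl 0, W.m y := by
  unfold auxG2
  rw [← Finset.sum_product']
  rw [Finset.sum_comm' (t' := W.lvl 0)
    (s' := fun x => ((W.lvl 0).erase x) ×ˢ ((W.lvl 0).erase x))]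
  swap
  · rintro ⟨a, b⟩ x
    simp only [Finset.mem_product, aux_mem_lvl, Finset.mem_filter, Finset.mem_univ, true_and,
      Finset.mem_erase]
    grind
  refine Finset.sum_congr rfl fun x hx => ?_
  have hx0 := (W.aux_mem_lvl 0 x).1 hx
  -- pull z out
  rw [Finset.sum_comm' (t' := univ.filter (fun z => x ⋖ z))
    (s' := fun z => ((W.lvl 0).erase x) ×ˢ (univ.filter (fun y => y ⋖ z ∧ y ≠ x)))]
  swap
  · rintro ⟨a, b⟩ z
    simp only [Finset.mem_product, aux_mem_lvl, Finset.mem_filter, Finset.mem_univ, true_and,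
      Finset.mem_erase]
    constructor
    · rintro ⟨⟨h1, h2⟩, h3, h4⟩
      exact ⟨⟨h1, h4, h2.1⟩, h3⟩
    · rintro ⟨⟨h1, h4, h2⟩, h3⟩
      have e1 := W.rk_covBy _ _ h3
      have e2 := W.rk_covBy _ _ h4
      exact ⟨⟨h1, h2, by omega⟩, h3, h4⟩
  have step : ∀ z ∈ univ.filter (fun z => x ⋖ z),
      ∑ y ∈ ((W.lvl 0).erase x) ×ˢ (univ.filter (fun y => y ⋖ z ∧ y ≠ x)),
        ∑ w ∈ univ.filter (fun w => w ≠ z ∧ x ⋖ w ∧ y.1 ⋖ w),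
            ∑ u ∈ univ.filter (fun u => z ⋖ u ∧ w ⋖ u),
              W.m u * W.p u z * W.p u w * W.p w y.1 * W.p z y.2 * W.p w x * W.p z x /
                (W.chSum x u * (1 - W.p u z * W.p z x / W.chSum x u) *
                  (1 - W.p w x) * (1 - W.p z x))
      = ∑ u ∈ univ.filter (fun u => z ⋖ u), W.m u * (W.p u z * W.p z x) := by
    intro z hz
    have hz : x ⋖ z := by simpa using hz
    have hzr := W.rk_covBy _ _ hz
    rw [Finset.sum_comm' (t' := univ.filter (fun w => w ≠ z ∧ x ⋖ w))
      (s' := fun w => (univ.filter (fun y => y ⋖ w ∧ y ≠ x)) ×ˢ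
        (univ.filter (fun y => y ⋖ z ∧ y ≠ x)))]
    swap
    · rintro ⟨a, b⟩ w
      simp only [Finset.mem_product, aux_mem_lvl, Finset.mem_filter, Finset.mem_univ, true_and,
        Finset.mem_erase]
      constructor
      · rintro ⟨⟨⟨h1, h2⟩, h3⟩, h4, h5, h6⟩
        exact ⟨⟨⟨h6, h1⟩, h3⟩, h4, h5⟩
      · rintro ⟨⟨⟨h6, h1⟩, h3⟩, h4, h5⟩
        have e1 := W.rk_covBy _ _ h5
        have e2 := W.rk_covBy _ _ h6
        exact ⟨⟨⟨h1, by omega⟩, h3⟩, h4, h5, h6⟩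
    have pz : 1 - W.p z x ≠ 0 := by
      have := W.aux_p_lt hcov x z (by omega) hz
      linarith
    have step2 : ∀ w ∈ univ.filter (fun w => w ≠ z ∧ x ⋖ w),
        ∑ y ∈ (univ.filter (fun y => y ⋖ w ∧ y ≠ x)) ×ˢ (univ.filter (fun y => y ⋖ z ∧ y ≠ x)),
            ∑ u ∈ univ.filter (fun u => z ⋖ u ∧ w ⋖ u),
              W.m u * W.p u z * W.p u w * W.p w y.1 * W.p z y.2 * W.p w x * W.p z x /
                (W.chSum x u * (1 - W.p u z * W.p z x / W.chSum x u) *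
                  (1 - W.p w x) * (1 - W.p z x))
        = ∑ u ∈ univ.filter (fun u => z ⋖ u ∧ w ⋖ u),
            W.m u * (W.p u z * W.p z x) /
              (W.chSum x u * (1 - W.p u z * W.p z x / W.chSum x u)) * (W.p u w * W.p w x) := by
      intro w hw
      have hw : w ≠ z ∧ x ⋖ w := by simpa using hw
      have hwr := W.rk_covBy _ _ hw.2
      have pw : 1 - W.p w x ≠ 0 := by
        have := W.aux_p_lt hcov x w (by omega) hw.2
        linarith
      rw [Finset.sum_comm]
      refine Finset.sum_congr rfl fun u _ => ?_
      have h3 := W.aux_sum_ne x z (by omega) hz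
      have h4 := W.aux_sum_ne x w (by omega) hw.2
      rw [Finset.sum_product]
      simp only [← Finset.sum_div, ← Finset.sum_mul, ← Finset.mul_sum, h3, h4]
      generalize W.chSum x u * (1 - W.p u z * W.p z x / W.chSum x u) = D
      rw [mul_assoc D, div_mul_eq_mul_div, mul_comm D, ← div_div]
      congr 1
      field_simp
    rw [Finset.sum_congr rfl step2]
    rw [Finset.sum_comm' (t' := univ.filter (fun u => z ⋖ u))
      (s' := fun u => (univ.filter (fun w => x ⋖ w ∧ w ⋖ u)).erase z)]
    swap
    · intro w u
      simp only [Finset.mem_filter, Finset.mem_univ, true_and, Finset.mem_erase]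
      tauto
    refine Finset.sum_congr rfl fun u hu => ?_
    have hu : z ⋖ u := by simpa using hu
    have hur := W.rk_covBy _ _ hu
    have hS := W.aux_chSum x u hx0 (by omega)
    have hzm : z ∈ univ.filter (fun w => x ⋖ w ∧ w ⋖ u) := by simp [hz, hu]
    rw [← Finset.add_sum_erase _ _ hzm] at hS
    have hpos : ∀ w, x ⋖ w ∧ w ⋖ u → 0 < W.p u w * W.p w x := fun w hw =>
      mul_pos ((W.p_pos_iff _ _).2 hw.2) ((W.p_pos_iff _ _).2 hw.1)
    have hR : 0 < ∑ w ∈ (univ.filter (fun w => x ⋖ w ∧ w ⋖ u)).erase z, W.p u w * W.p w x := by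
      obtain ⟨w, hw1, hw2⟩ := hzw x u z hx0 (by omega) (hz.lt.trans hu.lt) hz hu
      refine Finset.sum_pos (fun v hv => hpos v ?_) ⟨w, ?_⟩
      · simp only [Finset.mem_filter, Finset.mem_univ, true_and, Finset.mem_erase] at hv
        exact hv.2
      · simp [hw1, hw2]
    rw [← Finset.mul_sum]
    have hq := hpos z ⟨hz, hu⟩
    have hD : W.chSum x u * (1 - W.p u z * W.p z x / W.chSum x u) =
        ∑ w ∈ (univ.filter (fun w => x ⋖ w ∧ w ⋖ u)).erase z, W.p u w * W.p w x := by
      have : W.chSum x u ≠ 0 := by linarith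
      field_simp
      linarith
    rw [hD, div_mul_cancel₀ _ hR.ne']
  rw [Finset.sum_congr rfl step, W.m_eq x (by omega)]
  refine Finset.sum_congr rfl fun z hz => ?_
  have hz : x ⋖ z := by simpa using hz
  have hzr := W.rk_covBy _ _ hz
  rw [W.m_eq z (by omega), Finset.mul_sum]
  exact Finset.sum_congr rfl fun u _ => by ring

end WGP

/-- the constants of Property TL sum to one. -/
theorem stmt15 {P : Type} [Fintype P] [PartialOrder P] (W : WGP P)
    (hd : 2 ≤ W.d) (hstd : W.Standard)
    (hcov : ∀ y : P, 1 ≤ W.rk y → 2 ≤ (Finset.univ.filter (fun z => z ⋖ y)).card)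
    (hzw : ∀ x u z : P, W.rk x = 0 → W.rk u = 2 → x < u → x ⋖ z → z ⋖ u →
      ∃ w : P, w ≠ z ∧ x ⋖ w ∧ w ⋖ u)
    (c1e c1n c2e c2n : ℝ) :
    (W.TL1 c1e → W.TL2 c1n → c1e + c1n = 1) ∧
    (W.TL3 c2e → W.TL4 c2n → c2e + c2n = 1) := by
  refine ⟨fun h1 h2 => ?_, fun h1 h2 => ?_⟩
  · refine W.aux_main hd hcov W.auxG1 c1e c1n (fun y hy => ?_) h2 (W.aux_G1 hd hcov)
    rw [h1 y hy]
    simp only [WGP.auxG1, and_self]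
    exact Finset.sum_congr rfl fun z _ => by ring
  · refine W.aux_main hd hcov W.auxG2 c2e c2n (fun y hy => ?_) h2 (W.aux_G2 hd hcov hzw)
    rw [h1 y hy]
    simp only [WGP.auxG2, and_self]
end
end

section
/- Let P be a finite pure weighted graded poset of rank d ≥ 2 with a standard weight scheme. (1) If P is lower regular at level 1 with constant N^low_1 ≥ 2, then P satisfies equations TL.1 and TL.2 with constants c^=_1 = 1/(N^low_1 − 1) and c^≠_1 = (N^low_1 − 2)/(N^low_1 − 1). (2) If in addition P is lower regular at level 2 with constant N^low_2, middle regular at level 1 with constant N^mid_1 ≥ 2, and ⅄-regular with constant R, then P satisfies equations TL.3 and TL.4 with constants c^=_2 = (N^low_2·N^low_1/N^mid_1 − 1)·R·(R−1)/((N^mid_1−1)·N^mid_1·(N^low_1−1)²) and c^≠_2 = ((N^low_2·N^low_1/N^mid_1 − 2)·R − (N^low_1 − 2))/((N^mid_1−1)·(N^low_1−1)). -/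
open Finset

attribute [local instance] Classical.propDecidable

noncomputable section

namespace WGP

variable {P : Type} [Fintype P] [PartialOrder P] (W : WGP P)

lemma p_eq_zero {y x : P} (h : ¬ x ⋖ y) : W.p y x = 0 := by
  by_contra h2
  exact h ((W.p_pos_iff y x).1 (lt_of_le_of_ne (W.p_nonneg y x) (Ne.symm h2)))

lemma p_reg (hstd : W.Standard) {i : ℤ} {N : ℕ} (h : W.LowerRegAt i N) {y x : P}
    (hxy : x ⋖ y) (hy : W.rk y = i) : W.p y x = 1 / (N : ℝ) := by
  rw [hstd y x hxy, h y hy]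

lemma card_ne {N : ℕ} (s : P → Prop) (y : P) [DecidablePred s]
    [DecidablePred (fun x => s x ∧ x ≠ y)] (hy : s y)
    (h : (univ.filter (fun z => s z)).card = N) :
    ((univ.filter (fun x => s x ∧ x ≠ y)).card : ℝ) = (N : ℝ) - 1 := by
  have h1 : univ.filter (fun x => s x ∧ x ≠ y) = (univ.filter (fun z => s z)).erase y := by
    ext a; simp; tauto
  have h2 := Finset.card_erase_add_one (s := univ.filter (fun z => s z)) (a := y) (by simpa using hy)
  rw [h1, ← h, ← h2]; push_cast; ring

lemma card_ne_ne {N : ℕ} (s : P → Prop) (y y' : P) [DecidablePred s]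
    [DecidablePred (fun x => s x ∧ x ≠ y ∧ x ≠ y')] (hy : s y) (hy' : s y') (hne : y ≠ y')
    (h : (univ.filter (fun z => s z)).card = N) :
    ((univ.filter (fun x => s x ∧ x ≠ y ∧ x ≠ y')).card : ℝ) = (N : ℝ) - 2 := by
  have h1 : univ.filter (fun x => s x ∧ x ≠ y ∧ x ≠ y')
      = ((univ.filter (fun z => s z)).erase y).erase y' := by
    ext a; simp; tauto
  have h2 := Finset.card_erase_add_one (s := univ.filter (fun z => s z)) (a := y) (by simpa using hy)
  have h3 := Finset.card_erase_add_one (s := (univ.filter (fun z => s z)).erase y) (a := y')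
    (by simpa using ⟨hne.symm, hy'⟩)
  rw [h1, ← h, ← h2, ← h3]; push_cast; ring

lemma chSum_eq (hstd : W.Standard) {N1 N2 M : ℕ} (h1 : W.LowerRegAt 1 N1)
    (h2 : W.LowerRegAt 2 N2) (hM : W.MiddleRegAt 1 M) {x u : P} (hx : W.rk x = 0)
    (hu : W.rk u = 2) (hxu : x < u) :
    W.chSum x u = (M : ℝ) / ((N1 : ℝ) * N2) := by
  unfold chSum
  rw [hx, hu]
  have : ((2 : ℤ) - 0).toNat = 2 := rfl
  rw [this, pow_two, Matrix.mul_apply]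
  have h3 : ∀ z ∈ (univ : Finset P), W.upMat u z * W.upMat z x
      = if x ⋖ z ∧ z ⋖ u then 1 / ((N1 : ℝ) * N2) else 0 := by
    intro z _
    simp only [upMat, Matrix.of_apply]
    split_ifs with h
    · have hz : W.rk z = 1 := by rw [W.rk_covBy _ _ h.1, hx]; rfl
      rw [W.p_reg hstd h2 h.2 hu, W.p_reg hstd h1 h.1 hz]
      rw [div_mul_div_comm, mul_one, mul_comm (N2 : ℝ)]
    · by_cases hc : x ⋖ z
      · rw [W.p_eq_zero (y := u) (x := z) (fun h' => h ⟨hc, h'⟩), zero_mul]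
      · rw [W.p_eq_zero hc, mul_zero]
  rw [Finset.sum_congr rfl h3, ← Finset.sum_filter, Finset.sum_const,
    hM u x (by rw [hu]; rfl) (by rw [hx]; rfl) hxu, nsmul_eq_mul]
  ring

lemma count_x {N1 N2 M : ℕ} (h1 : W.LowerRegAt 1 N1)
    (h2 : W.LowerRegAt 2 N2) (hM : W.MiddleRegAt 1 M) {u : P}
    (hu : W.rk u = 2) :
    (univ.filter (fun x => W.rk x = 0 ∧ x < u)).card * M = N2 * N1 := by
  have a : ∑ x ∈ univ.filter (fun x => W.rk x = 0 ∧ x < u),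
      ∑ z ∈ univ.filter (fun z => x ⋖ z ∧ z ⋖ u), 1
      = ∑ z ∈ univ.filter (fun z => z ⋖ u), ∑ x ∈ univ.filter (fun x => x ⋖ z), 1 := by
    apply Finset.sum_comm'
    intro x z
    simp only [mem_filter, mem_univ, true_and]
    constructor
    · rintro ⟨_, h⟩; exact ⟨h.1, h.2⟩
    · rintro ⟨h, h'⟩
      have e1 := W.rk_covBy _ _ h
      have e2 := W.rk_covBy _ _ h'
      exact ⟨⟨by omega, h.lt.trans h'.lt⟩, h, h'⟩
  have b : ∀ x ∈ univ.filter (fun x => W.rk x = 0 ∧ x < u),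
      ∑ z ∈ univ.filter (fun z => x ⋖ z ∧ z ⋖ u), 1 = M := by
    intro x hx
    simp only [mem_filter, mem_univ, true_and] at hx
    rw [← Finset.card_eq_sum_ones]
    exact hM u x (by rw [hu]; rfl) (by rw [hx.1]; rfl) hx.2
  have c : ∀ z ∈ univ.filter (fun z => z ⋖ u),
      ∑ x ∈ univ.filter (fun x => x ⋖ z), 1 = N1 := by
    intro z hz
    simp only [mem_filter, mem_univ, true_and] at hz
    rw [← Finset.card_eq_sum_ones]
    have e2 := W.rk_covBy _ _ hz
    exact h1 z (by omega)
  rw [Finset.sum_congr rfl b, Finset.sum_congr rfl c] at a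
  simpa [h2 u hu] using a

lemma swap4 (y₁ y₂ : P) (f : P → ℝ) :
    ∑ x ∈ univ.filter (fun x => W.rk x = 0 ∧ x ≠ y₁ ∧ x ≠ y₂),
        ∑ z ∈ univ.filter (fun z => x ⋖ z ∧ y₂ ⋖ z),
          ∑ w ∈ univ.filter (fun w => w ≠ z ∧ x ⋖ w ∧ y₁ ⋖ w),
            ∑ u ∈ univ.filter (fun u => z ⋖ u ∧ w ⋖ u), f u
    = ∑ u ∈ univ.filter (fun u => W.rk u = 2 ∧ y₁ < u ∧ y₂ < u),
        ∑ x ∈ univ.filter (fun x => (W.rk x = 0 ∧ x < u) ∧ x ≠ y₁ ∧ x ≠ y₂),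
          ∑ z ∈ univ.filter (fun z => x ⋖ z ∧ y₂ ⋖ z ∧ z ⋖ u),
            ∑ w ∈ univ.filter (fun w => (x ⋖ w ∧ y₁ ⋖ w ∧ w ⋖ u) ∧ w ≠ z), f u := by
  have a : ∀ x z : P, ∑ w ∈ univ.filter (fun w => w ≠ z ∧ x ⋖ w ∧ y₁ ⋖ w),
            ∑ u ∈ univ.filter (fun u => z ⋖ u ∧ w ⋖ u), f u
      = ∑ u ∈ univ.filter (fun u => z ⋖ u ∧ y₁ < u),
        ∑ w ∈ univ.filter (fun w => (x ⋖ w ∧ y₁ ⋖ w ∧ w ⋖ u) ∧ w ≠ z), f u := by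
    intro x z
    apply Finset.sum_comm'
    intro w u
    simp only [mem_filter, mem_univ, true_and]
    constructor
    · rintro ⟨⟨h1, h2, h3⟩, h4, h5⟩
      exact ⟨⟨⟨h2, h3, h5⟩, h1⟩, h4, h3.lt.trans h5.lt⟩
    · tauto
  simp only [a]
  have b : ∀ x ∈ univ.filter (fun x => W.rk x = 0 ∧ x ≠ y₁ ∧ x ≠ y₂),
      ∑ z ∈ univ.filter (fun z => x ⋖ z ∧ y₂ ⋖ z),
      ∑ u ∈ univ.filter (fun u => z ⋖ u ∧ y₁ < u),
        ∑ w ∈ univ.filter (fun w => (x ⋖ w ∧ y₁ ⋖ w ∧ w ⋖ u) ∧ w ≠ z), f u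
      = ∑ u ∈ univ.filter (fun u => (W.rk u = 2 ∧ y₁ < u ∧ y₂ < u) ∧ x < u),
          ∑ z ∈ univ.filter (fun z => x ⋖ z ∧ y₂ ⋖ z ∧ z ⋖ u),
        ∑ w ∈ univ.filter (fun w => (x ⋖ w ∧ y₁ ⋖ w ∧ w ⋖ u) ∧ w ≠ z), f u := by
    intro x hx
    simp only [mem_filter, mem_univ, true_and] at hx
    apply Finset.sum_comm'
    intro z u
    simp only [mem_filter, mem_univ, true_and]
    constructor
    · rintro ⟨⟨h1, h2⟩, h3, h4⟩
      have e1 := W.rk_covBy _ _ h1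
      have e2 := W.rk_covBy _ _ h3
      exact ⟨⟨h1, h2, h3⟩, ⟨by omega, h4, h2.lt.trans h3.lt⟩, h1.lt.trans h3.lt⟩
    · tauto
  rw [Finset.sum_congr rfl b]
  apply Finset.sum_comm'
  intro x u
  simp only [mem_filter, mem_univ, true_and]
  tauto

lemma term_eq (hstd : W.Standard) {N1 N2 M : ℕ} (h1 : W.LowerRegAt 1 N1) (hN1 : 2 ≤ N1)
    (h2 : W.LowerRegAt 2 N2) (hM : W.MiddleRegAt 1 M) (hM2 : 2 ≤ M) {x y₁ y₂ z w u : P}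
    (hx : W.rk x = 0) (hxz : x ⋖ z) (hyz : y₂ ⋖ z) (hxw : x ⋖ w) (hyw : y₁ ⋖ w)
    (hz : z ⋖ u) (hw : w ⋖ u) :
    W.m u * W.p u z * W.p u w * W.p w y₁ * W.p z y₂ * W.p w x * W.p z x /
                (W.chSum x u * (1 - W.p u z * W.p z x / W.chSum x u) *
                  (1 - W.p w x) * (1 - W.p z x))
    = W.m u / ((N2 : ℝ) * N1 * ((M : ℝ) - 1) * ((N1 : ℝ) - 1) ^ 2) := by
  have rz : W.rk z = 1 := by rw [W.rk_covBy _ _ hxz, hx]; rfl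
  have rw' : W.rk w = 1 := by rw [W.rk_covBy _ _ hxw, hx]; rfl
  have ru : W.rk u = 2 := by rw [W.rk_covBy _ _ hz, rz]; rfl
  rw [W.chSum_eq hstd h1 h2 hM hx ru (hxz.lt.trans hz.lt), W.p_reg hstd h2 hz ru,
    W.p_reg hstd h2 hw ru, W.p_reg hstd h1 hxz rz, W.p_reg hstd h1 hyz rz,
    W.p_reg hstd h1 hxw rw', W.p_reg hstd h1 hyw rw']
  have n2 : (0 : ℝ) < N2 := by
    rw [← h2 u ru]
    exact_mod_cast Finset.card_pos.2 ⟨z, by simpa using hz⟩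
  have n1 : (2 : ℝ) ≤ N1 := by exact_mod_cast hN1
  have mm : (2 : ℝ) ≤ M := by exact_mod_cast hM2
  have k1 : (N1 : ℝ) - 1 ≠ 0 := by linarith
  have k2 : (M : ℝ) - 1 ≠ 0 := by linarith
  have k3 : (N1 : ℝ) ≠ 0 := by linarith
  have k4 : (M : ℝ) ≠ 0 := by linarith
  have k5 : (N2 : ℝ) ≠ 0 := n2.ne'
  have e1 : 1 - 1 / (N2 : ℝ) * (1 / N1) / ((M : ℝ) / ((N1 : ℝ) * N2)) = ((M : ℝ) - 1) / M := by
    field_simp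
  have e2 : 1 - 1 / (N1 : ℝ) = ((N1 : ℝ) - 1) / N1 := by
    field_simp
  rw [e1, e2]
  field_simp

lemma m_level1 (hd : 2 ≤ W.d) (hstd : W.Standard) {N2 : ℕ} (h2 : W.LowerRegAt 2 N2) {z : P}
    (hz : W.rk z = 1) :
    W.m z = ∑ u ∈ univ.filter (fun u => z ⋖ u), W.m u / (N2 : ℝ) := by
  rw [W.m_eq z (by omega)]
  apply Finset.sum_congr rfl
  intro u hu
  simp only [mem_filter, mem_univ, true_and] at hu
  rw [W.p_reg hstd h2 hu (by rw [W.rk_covBy _ _ hu, hz]; rfl)]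
  ring

lemma m_level0 (hd : 2 ≤ W.d) (hstd : W.Standard) {N1 : ℕ} (h1 : W.LowerRegAt 1 N1) {y : P}
    (hy : W.rk y = 0) :
    W.m y = ∑ z ∈ univ.filter (fun z => y ⋖ z), W.m z / (N1 : ℝ) := by
  rw [W.m_eq y (by omega)]
  apply Finset.sum_congr rfl
  intro u hu
  simp only [mem_filter, mem_univ, true_and] at hu
  rw [W.p_reg hstd h1 hu (by rw [W.rk_covBy _ _ hu, hy]; rfl)]
  ring

lemma swap_zu (y₁ y₂ : P) (hy : W.rk y₁ = 0) (f : P → ℝ) :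
    ∑ z ∈ univ.filter (fun z => y₁ ⋖ z ∧ y₂ ⋖ z), ∑ u ∈ univ.filter (fun u => z ⋖ u), f u
    = ∑ u ∈ univ.filter (fun u => W.rk u = 2 ∧ y₁ < u ∧ y₂ < u),
        ∑ z ∈ univ.filter (fun z => y₁ ⋖ z ∧ y₂ ⋖ z ∧ z ⋖ u), f u := by
  apply Finset.sum_comm'
  intro z u
  simp only [mem_filter, mem_univ, true_and]
  constructor
  · rintro ⟨⟨h1, h2⟩, h3⟩
    have e1 := W.rk_covBy _ _ h1
    have e2 := W.rk_covBy _ _ h3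
    exact ⟨⟨h1, h2, h3⟩, by omega, h1.lt.trans h3.lt, h2.lt.trans h3.lt⟩
  · tauto

/-- the right-hand side of TL.3 / TL.4 as a sum over `u`. -/
lemma rhs_eq (hstd : W.Standard) {N1 N2 M : ℕ} (h1 : W.LowerRegAt 1 N1) (hN1 : 2 ≤ N1)
    (h2 : W.LowerRegAt 2 N2) (hM : W.MiddleRegAt 1 M) (hM2 : 2 ≤ M) (y₁ y₂ : P) :
    ∑ x ∈ univ.filter (fun x => W.rk x = 0 ∧ x ≠ y₁ ∧ x ≠ y₂),
        ∑ z ∈ univ.filter (fun z => x ⋖ z ∧ y₂ ⋖ z),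
          ∑ w ∈ univ.filter (fun w => w ≠ z ∧ x ⋖ w ∧ y₁ ⋖ w),
            ∑ u ∈ univ.filter (fun u => z ⋖ u ∧ w ⋖ u),
              W.m u * W.p u z * W.p u w * W.p w y₁ * W.p z y₂ * W.p w x * W.p z x /
                (W.chSum x u * (1 - W.p u z * W.p z x / W.chSum x u) *
                  (1 - W.p w x) * (1 - W.p z x))
    = ∑ u ∈ univ.filter (fun u => W.rk u = 2 ∧ y₁ < u ∧ y₂ < u),
        (∑ x ∈ univ.filter (fun x => (W.rk x = 0 ∧ x < u) ∧ x ≠ y₁ ∧ x ≠ y₂),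
          ∑ z ∈ univ.filter (fun z => x ⋖ z ∧ y₂ ⋖ z ∧ z ⋖ u),
            ((univ.filter (fun w => (x ⋖ w ∧ y₁ ⋖ w ∧ w ⋖ u) ∧ w ≠ z)).card : ℝ)) *
          (W.m u / ((N2 : ℝ) * N1 * ((M : ℝ) - 1) * ((N1 : ℝ) - 1) ^ 2)) := by
  have a := W.swap4 y₁ y₂
    (fun u => W.m u / ((N2 : ℝ) * N1 * ((M : ℝ) - 1) * ((N1 : ℝ) - 1) ^ 2))
  simp only [Finset.sum_mul]
  simp only [Finset.sum_const, nsmul_eq_mul] at a ⊢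
  rw [← a]
  refine Finset.sum_congr rfl fun x hx => Finset.sum_congr rfl fun z hz =>
    Finset.sum_congr rfl fun w hw => ?_
  refine Finset.sum_congr rfl fun u hu => ?_
  simp only [mem_filter, mem_univ, true_and] at hx hz hw hu
  exact W.term_eq hstd h1 hN1 h2 hM hM2 hx.1 hz.1 hz.2 hw.2.1 hw.2.2 hu.1 hu.2

lemma tl1 (hd : 2 ≤ W.d) (hstd : W.Standard) {N1 : ℕ} (h1 : W.LowerRegAt 1 N1) (hN1 : 2 ≤ N1) :
    W.TL1 (1 / ((N1 : ℝ) - 1)) := by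
  intro y hy
  have n1 : (2 : ℝ) ≤ N1 := by exact_mod_cast hN1
  have k1 : (N1 : ℝ) - 1 ≠ 0 := by linarith
  have k3 : (N1 : ℝ) ≠ 0 := by linarith
  have e2 : 1 - 1 / (N1 : ℝ) = ((N1 : ℝ) - 1) / N1 := by
    field_simp
  rw [W.m_level0 hd hstd h1 hy, Finset.mul_sum]
  refine Finset.sum_congr rfl fun z hz => ?_
  simp only [mem_filter, mem_univ, true_and] at hz
  have rz : W.rk z = 1 := by rw [W.rk_covBy _ _ hz, hy]; rfl
  have a : ∀ x ∈ univ.filter (fun x => x ⋖ z ∧ x ≠ y), W.p z x / (1 - W.p z x) ^ 2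
      = 1 / (N1 : ℝ) / (1 - 1 / (N1 : ℝ)) ^ 2 := by
    intro x hx
    simp only [mem_filter, mem_univ, true_and] at hx
    rw [W.p_reg hstd h1 hx.1 rz]
  rw [Finset.sum_congr rfl a, Finset.sum_const, nsmul_eq_mul,
    card_ne (fun x => x ⋖ z) y hz (h1 z rz), W.p_reg hstd h1 hz rz, e2]
  field_simp

lemma tl2 (hstd : W.Standard) {N1 : ℕ} (h1 : W.LowerRegAt 1 N1) (hN1 : 2 ≤ N1) :
    W.TL2 (((N1 : ℝ) - 2) / ((N1 : ℝ) - 1)) := by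
  intro y₁ y₂ hy₁ hy₂ hne
  have n1 : (2 : ℝ) ≤ N1 := by exact_mod_cast hN1
  have k1 : (N1 : ℝ) - 1 ≠ 0 := by linarith
  have k3 : (N1 : ℝ) ≠ 0 := by linarith
  have e2 : 1 - 1 / (N1 : ℝ) = ((N1 : ℝ) - 1) / N1 := by
    field_simp
  rw [Finset.mul_sum]
  refine Finset.sum_congr rfl fun z hz => ?_
  simp only [mem_filter, mem_univ, true_and] at hz
  have rz : W.rk z = 1 := by rw [W.rk_covBy _ _ hz.1, hy₁]; rfl
  have a : ∀ x ∈ univ.filter (fun x => x ⋖ z ∧ x ≠ y₁ ∧ x ≠ y₂), W.p z x / (1 - W.p z x) ^ 2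
      = 1 / (N1 : ℝ) / (1 - 1 / (N1 : ℝ)) ^ 2 := by
    intro x hx
    simp only [mem_filter, mem_univ, true_and] at hx
    rw [W.p_reg hstd h1 hx.1 rz]
  rw [Finset.sum_congr rfl a, Finset.sum_const, nsmul_eq_mul,
    card_ne_ne (fun x => x ⋖ z) y₁ y₂ hz.1 hz.2 hne (h1 z rz), W.p_reg hstd h1 hz.1 rz,
    W.p_reg hstd h1 hz.2 rz, e2]
  field_simp

lemma count_real {N1 N2 M : ℕ} (h1 : W.LowerRegAt 1 N1)
    (h2 : W.LowerRegAt 2 N2) (hM : W.MiddleRegAt 1 M) (hM2 : 2 ≤ M) {u : P}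
    (hu : W.rk u = 2) :
    ((univ.filter (fun x => W.rk x = 0 ∧ x < u)).card : ℝ) = (N2 : ℝ) * N1 / M := by
  have mm : (2 : ℝ) ≤ M := by exact_mod_cast hM2
  have k4 : (M : ℝ) ≠ 0 := by linarith
  rw [eq_div_iff k4]
  exact_mod_cast W.count_x h1 h2 hM hu

lemma N2_ne {N1 N2 M : ℕ} (h1 : W.LowerRegAt 1 N1)
    (h2 : W.LowerRegAt 2 N2) (hM : W.MiddleRegAt 1 M) (hM2 : 2 ≤ M) {u y : P}
    (hu : W.rk u = 2) (hy : W.rk y = 0) (hyu : y < u) : (N2 : ℝ) ≠ 0 := by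
  have h := W.count_x h1 h2 hM hu
  have : 0 < (univ.filter (fun x => W.rk x = 0 ∧ x < u)).card :=
    Finset.card_pos.2 ⟨y, by simp [hy, hyu]⟩
  intro h0
  have h0' : N2 = 0 := by exact_mod_cast h0
  rw [h0', zero_mul] at h
  have := Nat.mul_pos this (show 0 < M by omega)
  omega

lemma tl3 (hd : 2 ≤ W.d) (hstd : W.Standard) {N1 N2 M R : ℕ} (h1 : W.LowerRegAt 1 N1)
    (hN1 : 2 ≤ N1) (h2 : W.LowerRegAt 2 N2) (hM : W.MiddleRegAt 1 M) (hM2 : 2 ≤ M)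
    (hR : W.WyeReg R) :
    W.TL3 (((N2 : ℝ) * (N1 : ℝ) / (M : ℝ) - 1) * (R : ℝ) * ((R : ℝ) - 1) /
          (((M : ℝ) - 1) * (M : ℝ) * ((N1 : ℝ) - 1) ^ 2)) := by
  intro y hy
  have n1 : (2 : ℝ) ≤ N1 := by exact_mod_cast hN1
  have mm : (2 : ℝ) ≤ M := by exact_mod_cast hM2
  have k1 : (N1 : ℝ) - 1 ≠ 0 := by linarith
  have k2 : (M : ℝ) - 1 ≠ 0 := by linarith
  have k3 : (N1 : ℝ) ≠ 0 := by linarith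
  have k4 : (M : ℝ) ≠ 0 := by linarith
  have a := W.rhs_eq hstd h1 hN1 h2 hM hM2 y y
  simp only [and_self] at a
  rw [a]
  have b : W.m y = ∑ u ∈ univ.filter (fun u => W.rk u = 2 ∧ y < u),
      ((M : ℝ) * (W.m u / N2 / N1)) := by
    have s := W.swap_zu y y hy (fun u => W.m u / N2 / N1)
    simp only [and_self] at s
    rw [W.m_level0 hd hstd h1 hy]
    have c : ∀ z ∈ univ.filter (fun z => y ⋖ z), W.m z / (N1 : ℝ)
        = ∑ u ∈ univ.filter (fun u => z ⋖ u), W.m u / N2 / N1 := by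
      intro z hz
      simp only [mem_filter, mem_univ, true_and] at hz
      rw [W.m_level1 hd hstd h2 (z := z) (by rw [W.rk_covBy _ _ hz, hy]; rfl), Finset.sum_div]
    rw [Finset.sum_congr rfl c, s]
    refine Finset.sum_congr rfl fun u hu => ?_
    simp only [mem_filter, mem_univ, true_and] at hu
    have := hM u y (by rw [hu.1]; rfl) (by rw [hy]; rfl) hu.2
    rw [Finset.sum_const, nsmul_eq_mul, ← this]
    congr 3
    ext z; simp
  rw [b, Finset.mul_sum]
  refine Finset.sum_congr rfl fun u hu => ?_
  simp only [mem_filter, mem_univ, true_and] at hu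
  have k5 := W.N2_ne h1 h2 hM hM2 hu.1 hy hu.2
  have c : ∀ x ∈ univ.filter (fun x => (W.rk x = 0 ∧ x < u) ∧ x ≠ y),
      ∑ z ∈ univ.filter (fun z => x ⋖ z ∧ y ⋖ z ∧ z ⋖ u),
        ((univ.filter (fun w => (x ⋖ w ∧ y ⋖ w ∧ w ⋖ u) ∧ w ≠ z)).card : ℝ)
      = (R : ℝ) * ((R : ℝ) - 1) := by
    intro x hx
    simp only [mem_filter, mem_univ, true_and] at hx
    have r := hR u x y hu.1 hx.1.1 hy hx.2 hx.1.2 hu.2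
    have t : ∀ z ∈ univ.filter (fun z => x ⋖ z ∧ y ⋖ z ∧ z ⋖ u),
        ((univ.filter (fun w => (x ⋖ w ∧ y ⋖ w ∧ w ⋖ u) ∧ w ≠ z)).card : ℝ) = (R : ℝ) - 1 := by
      intro z hz
      simp only [mem_filter, mem_univ, true_and] at hz
      exact card_ne (fun w => x ⋖ w ∧ y ⋖ w ∧ w ⋖ u) z hz r
    rw [Finset.sum_congr rfl t, Finset.sum_const, nsmul_eq_mul, r]
  rw [Finset.sum_congr rfl c, Finset.sum_const, nsmul_eq_mul,
    card_ne (fun x => W.rk x = 0 ∧ x < u) y ⟨hy, hu.2⟩ rfl, W.count_real h1 h2 hM hM2 hu.1]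
  field_simp

lemma tl4_count {N1 N2 M R : ℕ} (h1 : W.LowerRegAt 1 N1)
    (h2 : W.LowerRegAt 2 N2) (hM : W.MiddleRegAt 1 M) (hM2 : 2 ≤ M)
    (hR : W.WyeReg R) {u y₁ y₂ : P} (hu : W.rk u = 2) (hy₁ : W.rk y₁ = 0) (hy₂ : W.rk y₂ = 0)
    (hne : y₁ ≠ y₂) (hu₁ : y₁ < u) (hu₂ : y₂ < u) :
    ∑ x ∈ univ.filter (fun x => (W.rk x = 0 ∧ x < u) ∧ x ≠ y₁ ∧ x ≠ y₂),
          ∑ z ∈ univ.filter (fun z => x ⋖ z ∧ y₂ ⋖ z ∧ z ⋖ u),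
            ((univ.filter (fun w => (x ⋖ w ∧ y₁ ⋖ w ∧ w ⋖ u) ∧ w ≠ z)).card : ℝ)
    = (R : ℝ) * (((N2 : ℝ) * (N1 : ℝ) / (M : ℝ) - 2) * (R : ℝ) - ((N1 : ℝ) - 2)) := by
  have c : ∀ x ∈ univ.filter (fun x => (W.rk x = 0 ∧ x < u) ∧ x ≠ y₁ ∧ x ≠ y₂),
      ∑ z ∈ univ.filter (fun z => x ⋖ z ∧ y₂ ⋖ z ∧ z ⋖ u),
            ((univ.filter (fun w => (x ⋖ w ∧ y₁ ⋖ w ∧ w ⋖ u) ∧ w ≠ z)).card : ℝ)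
      = (R : ℝ) * R - ∑ z ∈ univ.filter (fun z => (x ⋖ z ∧ y₂ ⋖ z ∧ z ⋖ u) ∧ y₁ ⋖ z), 1 := by
    intro x hx
    simp only [mem_filter, mem_univ, true_and] at hx
    have r1 := hR u x y₁ hu hx.1.1 hy₁ hx.2.1 hx.1.2 hu₁
    have r2 := hR u x y₂ hu hx.1.1 hy₂ hx.2.2 hx.1.2 hu₂
    have t : ∀ z ∈ univ.filter (fun z => x ⋖ z ∧ y₂ ⋖ z ∧ z ⋖ u),
        ((univ.filter (fun w => (x ⋖ w ∧ y₁ ⋖ w ∧ w ⋖ u) ∧ w ≠ z)).card : ℝ)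
        = (R : ℝ) - if y₁ ⋖ z then 1 else 0 := by
      intro z hz
      simp only [mem_filter, mem_univ, true_and] at hz
      split_ifs with h
      · exact card_ne (fun w => x ⋖ w ∧ y₁ ⋖ w ∧ w ⋖ u) z ⟨hz.1, h, hz.2.2⟩ r1
      · rw [← r1, sub_zero]
        congr 2
        ext w
        simp only [mem_filter, mem_univ, true_and]
        constructor
        · exact fun h => h.1
        · rintro hw
          refine ⟨hw, ?_⟩
          rintro rfl
          exact h hw.2.1
    rw [Finset.sum_congr rfl t, Finset.sum_sub_distrib, Finset.sum_const, nsmul_eq_mul, r2,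
      ← Finset.sum_filter, Finset.filter_filter]
  rw [Finset.sum_congr rfl c, Finset.sum_sub_distrib, Finset.sum_const, nsmul_eq_mul,
    card_ne_ne (fun x => W.rk x = 0 ∧ x < u) y₁ y₂ ⟨hy₁, hu₁⟩ ⟨hy₂, hu₂⟩ hne rfl,
    W.count_real h1 h2 hM hM2 hu]
  have s : ∑ x ∈ univ.filter (fun x => (W.rk x = 0 ∧ x < u) ∧ x ≠ y₁ ∧ x ≠ y₂),
      ∑ z ∈ univ.filter (fun z => (x ⋖ z ∧ y₂ ⋖ z ∧ z ⋖ u) ∧ y₁ ⋖ z), (1 : ℝ)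
      = ∑ z ∈ univ.filter (fun z => y₁ ⋖ z ∧ y₂ ⋖ z ∧ z ⋖ u),
        ∑ x ∈ univ.filter (fun x => x ⋖ z ∧ x ≠ y₁ ∧ x ≠ y₂), (1 : ℝ) := by
    apply Finset.sum_comm'
    intro x z
    simp only [mem_filter, mem_univ, true_and]
    constructor
    · tauto
    · rintro ⟨⟨h, h'⟩, a, b, c⟩
      have e1 := W.rk_covBy _ _ h
      have e2 := W.rk_covBy _ _ c
      exact ⟨⟨⟨by omega, h.lt.trans c.lt⟩, h'⟩, ⟨h, b, c⟩, a⟩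
  have t : ∀ z ∈ univ.filter (fun z => y₁ ⋖ z ∧ y₂ ⋖ z ∧ z ⋖ u),
      ∑ x ∈ univ.filter (fun x => x ⋖ z ∧ x ≠ y₁ ∧ x ≠ y₂), (1 : ℝ) = (N1 : ℝ) - 2 := by
    intro z hz
    simp only [mem_filter, mem_univ, true_and] at hz
    have e2 := W.rk_covBy _ _ hz.1
    rw [Finset.sum_const, nsmul_eq_mul, mul_one,
      card_ne_ne (fun x => x ⋖ z) y₁ y₂ hz.1 hz.2.1 hne (h1 z (by omega))]
  rw [s, Finset.sum_congr rfl t, Finset.sum_const, nsmul_eq_mul,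
    hR u y₁ y₂ hu hy₁ hy₂ hne hu₁ hu₂]
  ring

lemma tl4 (hd : 2 ≤ W.d) (hstd : W.Standard) {N1 N2 M R : ℕ} (h1 : W.LowerRegAt 1 N1)
    (hN1 : 2 ≤ N1) (h2 : W.LowerRegAt 2 N2) (hM : W.MiddleRegAt 1 M) (hM2 : 2 ≤ M)
    (hR : W.WyeReg R) :
    W.TL4 ((((N2 : ℝ) * (N1 : ℝ) / (M : ℝ) - 2) * (R : ℝ) - ((N1 : ℝ) - 2)) /
          (((M : ℝ) - 1) * ((N1 : ℝ) - 1))) := by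
  intro y₁ y₂ hy₁ hy₂ hne
  have n1 : (2 : ℝ) ≤ N1 := by exact_mod_cast hN1
  have mm : (2 : ℝ) ≤ M := by exact_mod_cast hM2
  have k1 : (N1 : ℝ) - 1 ≠ 0 := by linarith
  have k2 : (M : ℝ) - 1 ≠ 0 := by linarith
  have k3 : (N1 : ℝ) ≠ 0 := by linarith
  have k4 : (M : ℝ) ≠ 0 := by linarith
  have e2 : 1 - 1 / (N1 : ℝ) = ((N1 : ℝ) - 1) / N1 := by
    field_simp
  rw [W.rhs_eq hstd h1 hN1 h2 hM hM2 y₁ y₂]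
  have c : ∀ z ∈ univ.filter (fun z => y₁ ⋖ z ∧ y₂ ⋖ z),
      W.m z * W.p z y₁ * W.p z y₂ / (1 - W.p z y₁)
        = ∑ u ∈ univ.filter (fun u => z ⋖ u), W.m u / N2 / (N1 * ((N1 : ℝ) - 1)) := by
    intro z hz
    simp only [mem_filter, mem_univ, true_and] at hz
    have rz : W.rk z = 1 := by rw [W.rk_covBy _ _ hz.1, hy₁]; rfl
    rw [← Finset.sum_div, ← W.m_level1 hd hstd h2 rz, W.p_reg hstd h1 hz.1 rz,
      W.p_reg hstd h1 hz.2 rz, e2]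
    field_simp
  rw [Finset.sum_congr rfl c, W.swap_zu y₁ y₂ hy₁, Finset.mul_sum]
  refine Finset.sum_congr rfl fun u hu => ?_
  simp only [mem_filter, mem_univ, true_and] at hu
  have k5 := W.N2_ne h1 h2 hM hM2 hu.1 hy₁ hu.2.1
  rw [W.tl4_count h1 h2 hM hM2 hR hu.1 hy₁ hy₂ hne hu.2.1 hu.2.2, Finset.sum_const, nsmul_eq_mul,
    hR u y₁ y₂ hu.1 hy₁ hy₂ hne hu.2.1 hu.2.2]
  generalize ((N2 : ℝ) * (N1 : ℝ) / (M : ℝ) - 2) * (R : ℝ) - ((N1 : ℝ) - 2) = Q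
  field_simp

end WGP

/-- standard posets with `2`-skeleton regularity satisfy the
TL equations with the stated constants. -/
theorem stmt16 {P : Type} [Fintype P] [PartialOrder P] (W : WGP P)
    (hd : 2 ≤ W.d) (hstd : W.Standard)
    (Nlow1 : ℕ) (hl1 : W.LowerRegAt 1 Nlow1) (hN1 : 2 ≤ Nlow1) :
    (W.TL1 (1 / ((Nlow1 : ℝ) - 1)) ∧
      W.TL2 (((Nlow1 : ℝ) - 2) / ((Nlow1 : ℝ) - 1))) ∧
    ∀ Nlow2 Nmid1 R : ℕ,
      W.LowerRegAt 2 Nlow2 → W.MiddleRegAt 1 Nmid1 → 2 ≤ Nmid1 → W.WyeReg R →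
      W.TL3 (((Nlow2 : ℝ) * (Nlow1 : ℝ) / (Nmid1 : ℝ) - 1) * (R : ℝ) * ((R : ℝ) - 1) /
          (((Nmid1 : ℝ) - 1) * (Nmid1 : ℝ) * ((Nlow1 : ℝ) - 1) ^ 2)) ∧
      W.TL4 ((((Nlow2 : ℝ) * (Nlow1 : ℝ) / (Nmid1 : ℝ) - 2) * (R : ℝ)
            - ((Nlow1 : ℝ) - 2)) /
          (((Nmid1 : ℝ) - 1) * ((Nlow1 : ℝ) - 1))) := by
  refine ⟨⟨W.tl1 hd hstd hl1 hN1, W.tl2 hstd hl1 hN1⟩, ?_⟩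
  intro Nlow2 Nmid1 R h2 hM hM2 hR
  exact ⟨W.tl3 hd hstd hl1 hN1 h2 hM hM2 hR, W.tl4 hd hstd hl1 hN1 h2 hM hM2 hR⟩
end
end

section
/- Let P be a finite pure weighted graded poset of rank d ≥ 2 with a standard weight scheme in which every element of positive rank covers at least two elements. For f ∈ C^0 and x ∈ P(0), define f̂_x ∈ C^0(P_x) by f̂_x(z) = (1/(1−p_{z→x}))·Σ_{y≠x, y⋖z} p_{z→y} f(y). Then: (1) ⟨f̂_x, 1⟩_x = (A f)(x) for every f ∈ C^0 and x ∈ P(0); (2) if equations TL.1 and TL.2 hold with constants c^=_1, c^≠_1, then for all f, g ∈ C^0: Σ_{x∈P(0)} m(x)·⟨f̂_x, ĝ_x⟩_x = c^=_1·⟨f,g⟩ + c^≠_1·⟨Af, g⟩; (3) if equations TL.3 and TL.4 hold with constants c^=_2, c^≠_2 and c^≠_2 ≠ 0, then for all f, g ∈ C^0: ⟨Af, g⟩ = (1/c^≠_2)·(Σ_{x∈P(0)} m(x)·⟨A_x f̂_x, ĝ_x⟩_x − c^=_2·⟨f,g⟩). -/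
open Finset

attribute [local instance] Classical.propDecidable

noncomputable section

namespace WGP

variable {P : Type} [Fintype P] [PartialOrder P] (W : WGP P)

/-- off-diagonal indicator -/
def dl (x y : P) : ℝ := if x = y then 0 else 1

/-- the edge form -/
def DD (y₁ y₂ : P) : ℝ :=
  ∑ z ∈ W.lvl 1, W.m z * W.p z y₁ * W.p z y₂ / (1 - W.p z y₂)

lemma p_zero {z x : P} (h : ¬ x ⋖ z) : W.p z x = 0 :=
  le_antisymm (not_lt.1 fun h' => h ((W.p_pos_iff z x).1 h')) (W.p_nonneg z x)

lemma rk_lt {x y : P} (h : x < y) : W.rk x < W.rk y := by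
  obtain ⟨c, hc, hcy⟩ := exists_covBy_le_of_lt h
  have h1 := W.rk_covBy _ _ hc
  have h2 := W.rk_mono hcy
  omega

lemma covBy_of {x y : P} (h : x ≤ y) (hr : W.rk y = W.rk x + 1) : x ⋖ y := by
  have hlt : x < y := lt_of_le_of_ne h (by rintro rfl; omega)
  refine ⟨hlt, fun c h1 h2 => ?_⟩
  have := W.rk_lt h1
  have := W.rk_lt h2
  omega

lemma mem_lvl {i : ℤ} {x : P} : x ∈ W.lvl i ↔ W.rk x = i := by simp [lvl]

lemma chSum_one {x z : P} (h : W.rk z = W.rk x + 1) : W.chSum x z = W.p z x := by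
  have : (W.rk z - W.rk x).toNat = 1 := by omega
  simp [chSum, this, upMat]

lemma up_mem {x z : P} (hx : x ∈ W.lvl 0) (h : x ⋖ z) : z ∈ W.lvl 1 := by
  rw [mem_lvl] at *
  have := W.rk_covBy _ _ h
  omega

lemma down_mem {x z : P} (hz : z ∈ W.lvl 1) (h : x ⋖ z) : x ∈ W.lvl 0 := by
  rw [mem_lvl] at *
  have := W.rk_covBy _ _ h
  omega

lemma innerL_eq {x : P} (hx : x ∈ W.lvl 0) (F G : P → ℝ) :
    W.innerL x 0 F G = ∑ z ∈ W.lvl 1, W.m z / W.m x * W.p z x * F z * G z := by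
  unfold innerL
  have hx' := W.mem_lvl.1 hx
  have : ∀ z ∈ W.linkLvl x 0, W.mL x z * F z * G z
      = W.m z / W.m x * W.p z x * F z * G z := by
    intro z hz
    simp only [linkLvl, mem_filter] at hz
    rw [mL, W.chSum_one (by omega)]
  rw [Finset.sum_congr rfl this]
  apply Finset.sum_subset
  · intro z hz
    simp only [linkLvl, mem_filter] at hz
    rw [mem_lvl]; omega
  · intro z hz hn
    have hz' := W.mem_lvl.1 hz
    have : ¬ x ⋖ z := fun h => hn (by simp [linkLvl, h.le]; omega)
    simp [W.p_zero this]

lemma hatF_eq {x z : P} (hz : z ∈ W.lvl 1) (f : P → ℝ) :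
    W.hatF x f z = ∑ y ∈ W.lvl 0, dl y x * W.p z y / (1 - W.p z x) * f y := by
  unfold hatF
  rw [Finset.mul_sum]
  have : ∀ y ∈ univ.filter (fun y => y ≠ x ∧ y ⋖ z), (1 / (1 - W.p z x)) * (W.p z y * f y)
      = dl y x * W.p z y / (1 - W.p z x) * f y := by
    intro y hy
    simp only [mem_filter] at hy
    rw [dl, if_neg hy.2.1]; ring
  rw [Finset.sum_congr rfl this]
  apply Finset.sum_subset
  · intro y hy
    simp only [mem_filter] at hy
    exact W.down_mem hz hy.2.2
  · intro y hy hn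
    by_cases h : y = x
    · simp [dl, h]
    · have : ¬ y ⋖ z := fun h' => hn (by simp [h, h'])
      simp [W.p_zero this]

lemma sum_edge {y : P} (hy : y ∈ W.lvl 0) (F : P → ℝ) (q : P → Prop) [DecidablePred q]
    (hq : ∀ z, q z → y ⋖ z) (h0 : ∀ z ∈ W.lvl 1, ¬ q z → F z = 0) :
    ∑ z ∈ univ.filter q, F z = ∑ z ∈ W.lvl 1, F z := by
  apply Finset.sum_subset
  · intro z hz
    simp only [mem_filter] at hz
    exact W.up_mem hy (hq z hz.2)
  · intro z hz hn
    exact h0 z hz (by simpa using hn)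

lemma Adj_eq {y : P} (hy : y ∈ W.lvl 0) (f : P → ℝ) :
    W.Adj f y = ∑ x ∈ W.lvl 0, dl x y * (W.DD x y / W.m y) * f x := by
  unfold Adj Matrix.mulVec dotProduct adjMat
  simp only [Matrix.of_apply]
  symm
  have key : ∀ x, (if x = y then 0 else
    ∑ z ∈ univ.filter (fun z => x ⋖ z ∧ y ⋖ z),
      W.m z * W.p z x * W.p z y / ((1 - W.p z y) * W.m y)) = dl x y * (W.DD x y / W.m y) := by
    intro x
    by_cases h : x = y
    · simp [h, dl]
    · rw [dl, if_neg h, if_neg h, one_mul, DD, Finset.sum_div]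
      rw [W.sum_edge hy _ (fun z => x ⋖ z ∧ y ⋖ z) (fun z hz => hz.2)]
      · exact Finset.sum_congr rfl fun z _ => by rw [div_div]
      · intro z _ hn
        by_cases h1 : x ⋖ z
        · have : ¬ y ⋖ z := fun h2 => hn ⟨h1, h2⟩
          simp [W.p_zero this]
        · simp [W.p_zero h1]
  simp only [key]
  apply Finset.sum_subset (Finset.subset_univ _)
  intro x _ hx
  have : W.DD x y = 0 := by
    apply Finset.sum_eq_zero
    intro z hz
    have : ¬ x ⋖ z := fun h => hx (W.down_mem hz h)
    simp [W.p_zero this]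
  simp [this]

lemma inner_eq (f g : P → ℝ) : W.innerAt 0 f g =
    ∑ y₁ ∈ W.lvl 0, ∑ y₂ ∈ W.lvl 0, f y₁ * g y₂ * (if y₁ = y₂ then W.m y₁ else 0) := by
  unfold innerAt
  refine Finset.sum_congr rfl fun y hy => ?_
  rw [Finset.sum_eq_single y]
  · simp; ring
  · intro b _ hb
    simp [Ne.symm hb]
  · intro h; exact absurd hy h

lemma innerAdj_eq (f g : P → ℝ) : W.innerAt 0 (W.Adj f) g =
    ∑ y₁ ∈ W.lvl 0, ∑ y₂ ∈ W.lvl 0, f y₁ * g y₂ * (dl y₁ y₂ * W.DD y₁ y₂) := by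
  unfold innerAt
  rw [Finset.sum_comm]
  refine Finset.sum_congr rfl fun y hy => ?_
  rw [W.Adj_eq hy, Finset.mul_sum, Finset.sum_mul]
  refine Finset.sum_congr rfl fun x hx => ?_
  have := (W.m_pos y).ne'
  field_simp

lemma bilin {ι : Type} (S : Finset ι) (L : Finset P) (a : ι → ℝ) (b c : ι → P → ℝ)
    (f g : P → ℝ) :
    ∑ i ∈ S, a i * (∑ y ∈ L, b i y * f y) * (∑ y ∈ L, c i y * g y)
      = ∑ y₁ ∈ L, ∑ y₂ ∈ L, f y₁ * g y₂ * ∑ i ∈ S, a i * b i y₁ * c i y₂ := by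
  have : ∀ i ∈ S, a i * (∑ y ∈ L, b i y * f y) * (∑ y ∈ L, c i y * g y)
      = ∑ y₁ ∈ L, ∑ y₂ ∈ L, f y₁ * g y₂ * (a i * b i y₁ * c i y₂) := by
    intro i _
    rw [mul_assoc, Finset.sum_mul_sum, Finset.mul_sum]
    refine Finset.sum_congr rfl fun y _ => ?_
    rw [Finset.mul_sum]
    refine Finset.sum_congr rfl fun y _ => ?_
    ring
  rw [Finset.sum_congr rfl this, Finset.sum_comm]
  refine Finset.sum_congr rfl fun y _ => ?_
  rw [Finset.sum_comm]
  refine Finset.sum_congr rfl fun y _ => ?_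
  rw [Finset.mul_sum]

lemma combine (c c' : ℝ) (f g : P → ℝ) (B : P → P → ℝ)
    (h1 : ∀ y ∈ W.lvl 0, B y y = c * W.m y)
    (h2 : ∀ y₁ ∈ W.lvl 0, ∀ y₂ ∈ W.lvl 0, y₁ ≠ y₂ → B y₁ y₂ = c' * W.DD y₁ y₂) :
    ∑ y₁ ∈ W.lvl 0, ∑ y₂ ∈ W.lvl 0, f y₁ * g y₂ * B y₁ y₂
      = c * W.innerAt 0 f g + c' * W.innerAt 0 (W.Adj f) g := by
  rw [inner_eq, innerAdj_eq, Finset.mul_sum, Finset.mul_sum, ← Finset.sum_add_distrib]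
  refine Finset.sum_congr rfl fun y₁ hy₁ => ?_
  rw [Finset.mul_sum, Finset.mul_sum, ← Finset.sum_add_distrib]
  refine Finset.sum_congr rfl fun y₂ hy₂ => ?_
  by_cases h : y₁ = y₂
  · subst h
    rw [h1 _ hy₁, if_pos rfl, dl, if_pos rfl]; ring
  · rw [h2 _ hy₁ _ hy₂ h, if_neg h, dl, if_neg h]; ring

lemma part1 (f : P → ℝ) (x : P) (hx : x ∈ W.lvl 0) :
    W.innerL x 0 (W.hatF x f) (fun _ => 1) = W.Adj f x := by
  rw [W.innerL_eq hx, W.Adj_eq hx]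
  have : ∀ z ∈ W.lvl 1, W.m z / W.m x * W.p z x * W.hatF x f z * 1
      = ∑ y ∈ W.lvl 0, dl y x *
        (W.m z * W.p z y * W.p z x / (1 - W.p z x) / W.m x) * f y := by
    intro z hz
    rw [W.hatF_eq hz, mul_one, Finset.mul_sum]
    exact Finset.sum_congr rfl fun y _ => by ring
  rw [Finset.sum_congr rfl this, Finset.sum_comm]
  refine Finset.sum_congr rfl fun y _ => ?_
  rw [DD, Finset.sum_div, Finset.mul_sum, Finset.sum_mul]

lemma sum_vert {z : P} (hz : z ∈ W.lvl 1) (q : P → Prop) [DecidablePred q] :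
    ∑ x ∈ univ.filter (fun x => x ⋖ z ∧ q x), W.p z x / (1 - W.p z x) ^ 2
      = ∑ x ∈ W.lvl 0, (if q x then W.p z x / (1 - W.p z x) ^ 2 else 0) := by
  rw [← Finset.sum_filter]
  apply Finset.sum_subset
  · intro x hx
    simp only [mem_filter, mem_univ, true_and] at hx ⊢
    exact ⟨W.down_mem hz hx.1, hx.2⟩
  · intro x hx hn
    simp only [mem_filter, mem_univ, true_and] at hx hn
    have : ¬ x ⋖ z := fun h => hn ⟨h, hx.2⟩
    simp [W.p_zero this]

lemma part2 (c1e c1n : ℝ) (h1 : W.TL1 c1e) (h2 : W.TL2 c1n) (f g : P → ℝ) :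
    ∑ x ∈ W.lvl 0, W.m x * W.innerL x 0 (W.hatF x f) (W.hatF x g)
        = c1e * W.innerAt 0 f g + c1n * W.innerAt 0 (W.Adj f) g := by
  have e : ∀ x ∈ W.lvl 0, W.m x * W.innerL x 0 (W.hatF x f) (W.hatF x g)
      = ∑ z ∈ W.lvl 1, W.m z * W.p z x *
        (∑ y ∈ W.lvl 0, dl y x * W.p z y / (1 - W.p z x) * f y) *
        (∑ y ∈ W.lvl 0, dl y x * W.p z y / (1 - W.p z x) * g y) := by
    intro x hx
    rw [W.innerL_eq hx, Finset.mul_sum]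
    refine Finset.sum_congr rfl fun z hz => ?_
    rw [W.hatF_eq hz, W.hatF_eq hz]
    have := (W.m_pos x).ne'
    field_simp
  rw [Finset.sum_congr rfl e, ← Finset.sum_product'
    (f := fun x z => W.m z * W.p z x *
        (∑ y ∈ W.lvl 0, dl y x * W.p z y / (1 - W.p z x) * f y) *
        (∑ y ∈ W.lvl 0, dl y x * W.p z y / (1 - W.p z x) * g y))]
  rw [bilin _ _ (fun i : P × P => W.m i.2 * W.p i.2 i.1)
    (fun i y => dl y i.1 * W.p i.2 y / (1 - W.p i.2 i.1))
    (fun i y => dl y i.1 * W.p i.2 y / (1 - W.p i.2 i.1))]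
  apply W.combine
  · intro y hy
    rw [h1 y (W.mem_lvl.1 hy), Finset.sum_product, Finset.sum_comm]
    rw [W.sum_edge hy _ _ (fun z hz => hz)]
    · refine Finset.sum_congr rfl fun z hz => ?_
      rw [W.sum_vert hz (fun x => x ≠ y), Finset.mul_sum]
      refine Finset.sum_congr rfl fun x hx => ?_
      by_cases h : y = x
      · simp [dl, h]
      · simp only [dl, if_neg h, Ne, Ne.symm h, not_false_eq_true, if_true]
        generalize 1 - W.p z x = k
        ring
    · intro z _ h
      simp [W.p_zero h]
  · intro y₁ hy₁ y₂ hy₂ hne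
    have h := h2 y₂ y₁ (W.mem_lvl.1 hy₂) (W.mem_lvl.1 hy₁) hne.symm
    rw [W.sum_edge hy₁ _ (fun z => y₂ ⋖ z ∧ y₁ ⋖ z) (fun z hz => hz.2), W.sum_edge hy₁ _ (fun z => y₂ ⋖ z ∧ y₁ ⋖ z) (fun z hz => hz.2)] at h
    · rw [DD, Finset.sum_product, Finset.sum_comm]
      trans
      swap
      · trans
        · exact h.symm
        · congr 1
          exact Finset.sum_congr rfl fun z _ => by ring
      · refine Finset.sum_congr rfl fun z hz => ?_
        rw [W.sum_vert hz (fun x => x ≠ y₂ ∧ x ≠ y₁), Finset.mul_sum]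
        refine Finset.sum_congr rfl fun x hx => ?_
        by_cases h : y₁ = x
        · simp [dl, h]
        · by_cases h' : y₂ = x
          · simp [dl, h']
          · simp only [dl, if_neg h, if_neg h', Ne, Ne.symm h, Ne.symm h', not_false_eq_true,
              if_true, and_self]
            generalize 1 - W.p z x = k
            ring
    all_goals
      intro z _ hn
      by_cases ha : y₁ ⋖ z
      · have : ¬ y₂ ⋖ z := fun h2 => hn ⟨h2, ha⟩
        simp [W.p_zero this]
      · simp [W.p_zero ha]

/-- the coefficient of the quadruple sum -/
def QQ (x z w u : P) : ℝ :=
  W.m u * W.p u z * W.p u w * W.p w x * W.p z x /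
    (W.chSum x u * (1 - W.p u z * W.p z x / W.chSum x u))

lemma AdjL_eq {x w : P} (hx : x ∈ W.lvl 0) (hw : w ∈ W.lvl 1) (F : P → ℝ) :
    W.m x * (W.m w / W.m x * W.p w x * W.AdjL x F w)
      = ∑ z ∈ W.lvl 1, ∑ u, dl z w * W.QQ x w z u * F z := by
  have hx' := W.mem_lvl.1 hx
  have hw' := W.mem_lvl.1 hw
  unfold AdjL Matrix.mulVec dotProduct adjMatL
  simp only [Matrix.of_apply]
  rw [Finset.mul_sum, Finset.mul_sum]
  symm
  have hmx := (W.m_pos x).ne'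
  have hmw := (W.m_pos w).ne'
  have key : ∀ z ∈ W.lvl 1, ∑ u, dl z w * W.QQ x w z u * F z =
    W.m x * (W.m w / W.m x * W.p w x * ((if z = w then 0 else
    ∑ u ∈ univ.filter (fun u => z ⋖ u ∧ w ⋖ u),
      W.mL x u * W.pL x u z * W.pL x u w / ((1 - W.pL x u w) * W.mL x w)) * F z)) := by
    intro z hz
    have hz' := W.mem_lvl.1 hz
    by_cases h : z = w
    · simp [h, dl]
    · simp only [dl, if_neg h]
      rw [Finset.sum_mul, Finset.mul_sum, Finset.mul_sum]
      symm
      rw [← Finset.sum_filter_add_sum_filter_not univ (fun u => z ⋖ u ∧ w ⋖ u)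
        (fun u => 1 * W.QQ x w z u * F z)]
      rw [Finset.sum_eq_zero (s := univ.filter (fun u => ¬ (z ⋖ u ∧ w ⋖ u))), add_zero]
      · refine Finset.sum_congr rfl fun u hu => ?_
        unfold pL mL QQ
        rw [W.chSum_one (x := x) (z := z) (by omega), W.chSum_one (x := x) (z := w) (by omega)]
        by_cases hp : W.p w x = 0
        · simp [hp]
        by_cases hc : W.chSum x u = 0
        · simp [hc]
        generalize hk : 1 - W.p u w * W.p w x / W.chSum x u = k
        by_cases hk0 : k = 0
        · simp [hk0]
        field_simp
      · intro u hu
        simp only [mem_filter, mem_univ, true_and] at hu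
        unfold QQ
        by_cases ha : z ⋖ u
        · have : ¬ w ⋖ u := fun h2 => hu ⟨ha, h2⟩
          simp [W.p_zero this]
        · simp [W.p_zero ha]
  rw [Finset.sum_congr rfl key]
  apply Finset.sum_subset (Finset.subset_univ _)
  intro z _ hz
  have : (if z = w then 0 else
    ∑ u ∈ univ.filter (fun u => z ⋖ u ∧ w ⋖ u),
      W.mL x u * W.pL x u z * W.pL x u w / ((1 - W.pL x u w) * W.mL x w)) = 0 := by
    split_ifs with h
    · rfl
    · apply Finset.sum_eq_zero
      intro u hu
      simp only [mem_filter, mem_univ, true_and] at hu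
      have h1 := W.rk_covBy _ _ hu.1
      have h2 := W.rk_covBy _ _ hu.2
      exact absurd (W.mem_lvl.2 (by omega)) hz
  rw [this]; simp

lemma quad {y₁ y₂ : P} (hy₁ : y₁ ∈ W.lvl 0) (hy₂ : y₂ ∈ W.lvl 0) (q : P → Prop)
    [DecidablePred q]
    (hq : ∀ x, q x ↔ W.rk x = 0 ∧ x ≠ y₁ ∧ x ≠ y₂) :
    ∑ x ∈ univ.filter q,
        ∑ z ∈ univ.filter (fun z => x ⋖ z ∧ y₂ ⋖ z),
          ∑ w ∈ univ.filter (fun w => w ≠ z ∧ x ⋖ w ∧ y₁ ⋖ w),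
            ∑ u ∈ univ.filter (fun u => z ⋖ u ∧ w ⋖ u),
              W.m u * W.p u z * W.p u w * W.p w y₁ * W.p z y₂ * W.p w x * W.p z x /
                (W.chSum x u * (1 - W.p u z * W.p z x / W.chSum x u) *
                  (1 - W.p w x) * (1 - W.p z x))
    = ∑ x ∈ W.lvl 0, ∑ z ∈ W.lvl 1, ∑ w ∈ W.lvl 1, ∑ u,
        dl w z * W.QQ x z w u * (dl y₁ x * W.p w y₁ / (1 - W.p w x)) *
          (dl y₂ x * W.p z y₂ / (1 - W.p z x)) := by
  have hs : univ.filter q ⊆ W.lvl 0 := by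
    intro x hx
    simp only [mem_filter, mem_univ, true_and] at hx
    exact W.mem_lvl.2 ((hq x).1 hx).1
  rw [← Finset.sum_subset hs]
  · refine Finset.sum_congr rfl fun x hx => ?_
    simp only [mem_filter, mem_univ, true_and, hq] at hx
    obtain ⟨hx0, hx1, hx2⟩ := hx
    have hxL := W.mem_lvl.2 hx0
    rw [← W.sum_edge hxL _ (fun z => x ⋖ z ∧ y₂ ⋖ z) (fun z hz => hz.1)]
    · refine Finset.sum_congr rfl fun z hz => ?_
      rw [← W.sum_edge hxL _ (fun w => w ≠ z ∧ x ⋖ w ∧ y₁ ⋖ w) (fun z hz => hz.2.1)]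
      · refine Finset.sum_congr rfl fun w hw => ?_
        simp only [mem_filter, mem_univ, true_and] at hw
        have e : ∀ u, W.m u * W.p u z * W.p u w * W.p w y₁ * W.p z y₂ * W.p w x * W.p z x /
                (W.chSum x u * (1 - W.p u z * W.p z x / W.chSum x u) *
                  (1 - W.p w x) * (1 - W.p z x)) =
            dl w z * W.QQ x z w u * (dl y₁ x * W.p w y₁ / (1 - W.p w x)) *
              (dl y₂ x * W.p z y₂ / (1 - W.p z x)) := by
          intro u
          rw [dl, dl, dl, if_neg hw.1, if_neg (Ne.symm hx1), if_neg (Ne.symm hx2), QQ]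
          simp only [div_eq_mul_inv, mul_inv]
          ring
        simp only [e]
        apply Finset.sum_subset (Finset.subset_univ _)
        intro u _ hu
        simp only [mem_filter, mem_univ, true_and] at hu
        unfold QQ
        by_cases ha : z ⋖ u
        · have : ¬ w ⋖ u := fun h2 => hu ⟨ha, h2⟩
          simp [W.p_zero this]
        · simp [W.p_zero ha]
      · intro w _ hn
        apply Finset.sum_eq_zero
        intro u _
        by_cases h : w = z
        · simp [dl, h]
        · by_cases ha : x ⋖ w
          · have : ¬ y₁ ⋖ w := fun h2 => hn ⟨h, ha, h2⟩
            simp [W.p_zero this]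
          · simp [W.p_zero ha, QQ]
    · intro z _ hn
      apply Finset.sum_eq_zero
      intro w _
      apply Finset.sum_eq_zero
      intro u _
      by_cases ha : x ⋖ z
      · have : ¬ y₂ ⋖ z := fun h2 => hn ⟨ha, h2⟩
        simp [W.p_zero this]
      · simp [W.p_zero ha, QQ]
  · intro x hx hn
    simp only [mem_filter, mem_univ, true_and, hq] at hn
    apply Finset.sum_eq_zero
    intro z _
    apply Finset.sum_eq_zero
    intro w _
    apply Finset.sum_eq_zero
    intro u _
    by_cases h : y₁ = x
    · simp [dl, h]
    · by_cases h' : y₂ = x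
      · simp [dl, h']
      · exact absurd ⟨W.mem_lvl.1 hx, Ne.symm h, Ne.symm h'⟩ hn

lemma part3 (hstd : W.Standard) (c2e c2n : ℝ) (h1 : W.TL3 c2e) (h2 : W.TL4 c2n)
    (f g : P → ℝ) :
    ∑ x ∈ W.lvl 0, W.m x * W.innerL x 0 (W.AdjL x (W.hatF x f)) (W.hatF x g)
        = c2e * W.innerAt 0 f g + c2n * W.innerAt 0 (W.Adj f) g := by
  have e : ∀ x ∈ W.lvl 0, W.m x * W.innerL x 0 (W.AdjL x (W.hatF x f)) (W.hatF x g)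
      = ∑ z ∈ W.lvl 1, ∑ w ∈ W.lvl 1, ∑ u, dl w z * W.QQ x z w u *
        (∑ y ∈ W.lvl 0, dl y x * W.p w y / (1 - W.p w x) * f y) *
        (∑ y ∈ W.lvl 0, dl y x * W.p z y / (1 - W.p z x) * g y) := by
    intro x hx
    rw [W.innerL_eq hx, Finset.mul_sum]
    refine Finset.sum_congr rfl fun z hz => ?_
    rw [← mul_assoc (W.m x), W.AdjL_eq hx hz, W.hatF_eq hz, Finset.sum_mul]
    refine Finset.sum_congr rfl fun w hw => ?_
    rw [W.hatF_eq hw, Finset.sum_mul]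
  rw [Finset.sum_congr rfl e]
  have e2 := bilin (W.lvl 0 ×ˢ W.lvl 1 ×ˢ W.lvl 1 ×ˢ univ) (W.lvl 0)
    (fun i : P × P × P × P => dl i.2.2.1 i.2.1 * W.QQ i.1 i.2.1 i.2.2.1 i.2.2.2)
    (fun i y => dl y i.1 * W.p i.2.2.1 y / (1 - W.p i.2.2.1 i.1))
    (fun i y => dl y i.1 * W.p i.2.1 y / (1 - W.p i.2.1 i.1)) f g
  simp only [Finset.sum_product] at e2
  rw [e2]
  apply W.combine
  · intro y hy
    rw [h1 y (W.mem_lvl.1 hy)]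
    exact (W.quad hy hy (fun x => W.rk x = 0 ∧ x ≠ y) (by intro x; simp)).symm
  · intro y₁ hy₁ y₂ hy₂ hne
    have h := h2 y₁ y₂ (W.mem_lvl.1 hy₁) (W.mem_lvl.1 hy₂) hne
    rw [W.quad hy₁ hy₂ (fun x => W.rk x = 0 ∧ x ≠ y₁ ∧ x ≠ y₂) (by intro x; rfl)] at h
    rw [← h]
    congr 1
    rw [DD, ← W.sum_edge hy₁ _ (fun z => y₁ ⋖ z ∧ y₂ ⋖ z) (fun z hz => hz.1)]
    · refine Finset.sum_congr rfl fun z hz => ?_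
      simp only [mem_filter, mem_univ, true_and] at hz
      rw [hstd z y₁ hz.1, hstd z y₂ hz.2]
    · intro z _ hn
      by_cases ha : y₁ ⋖ z
      · have : ¬ y₂ ⋖ z := fun h2 => hn ⟨ha, h2⟩
        simp [W.p_zero this]
      · simp [W.p_zero ha]

end WGP

/-- properties of the induced function `f̂`. -/
theorem stmt17 {P : Type} [Fintype P] [PartialOrder P] (W : WGP P)
    (hd : 2 ≤ W.d) (hstd : W.Standard)
    (hcov : ∀ y : P, 1 ≤ W.rk y → 2 ≤ (Finset.univ.filter (fun z => z ⋖ y)).card)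
    (c1e c1n c2e c2n : ℝ) :
    (∀ f : P → ℝ, ∀ x : P, W.rk x = 0 →
      W.innerL x 0 (W.hatF x f) (fun _ => 1) = W.Adj f x) ∧
    (W.TL1 c1e → W.TL2 c1n → ∀ f g : P → ℝ,
      ∑ x ∈ W.lvl 0, W.m x * W.innerL x 0 (W.hatF x f) (W.hatF x g)
        = c1e * W.innerAt 0 f g + c1n * W.innerAt 0 (W.Adj f) g) ∧
    (W.TL3 c2e → W.TL4 c2n → c2n ≠ 0 → ∀ f g : P → ℝ,
      W.innerAt 0 (W.Adj f) g
        = (1 / c2n) *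
            ((∑ x ∈ W.lvl 0, W.m x * W.innerL x 0 (W.AdjL x (W.hatF x f)) (W.hatF x g))
              - c2e * W.innerAt 0 f g)) := by
  refine ⟨fun f x hx => W.part1 f x (W.mem_lvl.2 hx),
    fun h1 h2 f g => W.part2 c1e c1n h1 h2 f g, fun h1 h2 h0 f g => ?_⟩
  rw [W.part3 hstd c2e c2n h1 h2 f g]
  field_simp
  ring
end
end
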